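/- Let μ ∈ M(0,1). Then for every fixed integer ν ≥ 0, Q_{n+1}^{(ν)}(z)/Q_n^{(ν)}(z) → φ(z)/2 uniformly on every compact subset of ℂ∖S_μ, and (1/n)·Q_n^{(ν+1)}(z)/Q_n^{(ν)}(z) → 1/√(z²−1) uniformly on every compact subset of ℂ̄∖S_μ. -/

import Mathlib

open MeasureTheory Polynomial Filter Topology Set
open scoped Classical

/-- The branch of `√(z²-1)` on `ℂ ∖ [-1,1]` that is positive for `z > 1`. -/
noncomputable def sqrtB (z : ℂ) : ℂ := z * (1 - 1 / z ^ 2) ^ ((1 : ℂ) / 2)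

/-- `φ(z) = z + √(z²-1)`, the conformal map of `ℂ ∖ [-1,1]` onto the exterior
of the closed unit disk. -/
noncomputable def phi (z : ℂ) : ℂ := z + sqrtB z

/-- The support of a measure on `ℝ`: points all of whose neighborhoods have
positive measure. -/
def msupp (μ : Measure ℝ) : Set ℝ := {x | ∀ U ∈ nhds x, μ U ≠ 0}

/-- The support `S_μ`, viewed as a subset of `ℂ`. -/
def msuppC (μ : Measure ℝ) : Set ℂ := Complex.ofReal '' msupp μ

/-- `l` is the sequence of orthonormal polynomials of the measure `μ`:
degree `n`, positive leading coefficient, `∫ l_m l_n dμ = δ_{mn}`. -/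
structure IsOrthonormalPolys (μ : Measure ℝ) (l : ℕ → Polynomial ℝ) : Prop where
  natDegree_eq : ∀ n, (l n).natDegree = n
  leadingCoeff_pos : ∀ n, 0 < (l n).leadingCoeff
  orthonormal : ∀ m n, ∫ x, (l m).eval x * (l n).eval x ∂μ = if m = n then 1 else 0

/-- `μ ∈ M(0,1)`: the recurrence coefficients of the orthonormal polynomials
`l_n` satisfy `a_n → 1/2`, `b_n → 0`, where
`x·l_n = a_{n+1} l_{n+1} + b_n l_n + a_n l_{n-1}`. -/
structure IsM01 (μ : Measure ℝ) (l : ℕ → Polynomial ℝ) (a b : ℕ → ℝ) : Prop where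
  onp : IsOrthonormalPolys μ l
  recurrence_zero : X * l 0 = a 1 • l 1 + b 0 • l 0
  recurrence : ∀ n : ℕ,
    X * l (n + 1) = a (n + 2) • l (n + 2) + b (n + 1) • l (n + 1) + a (n + 1) • l n
  tendsto_a : Tendsto a atTop (nhds (1 / 2))
  tendsto_b : Tendsto b atTop (nhds 0)

/-- The rational function `r = S/T` with
`S(z) = ∏ (z-c_i)^{A_i}`, `T(z) = ∏ (z-d_j)^{B_j}`, evaluated on the real line. -/
noncomputable def ratFn {h ℓ : ℕ} (c : Fin h → ℂ) (d : Fin ℓ → ℂ)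
    (A : Fin h → ℕ) (B : Fin ℓ → ℕ) (x : ℝ) : ℂ :=
  (∏ i, ((x : ℂ) - c i) ^ (A i)) / ∏ j, ((x : ℂ) - d j) ^ (B j)

/-- `Q` is the monic polynomial of least degree, not identically zero, with
`∫ p(x) Q(x) r(x) dμ(x) = 0` for every polynomial `p` of degree `≤ n-1`. -/
def IsQPoly (μ : Measure ℝ) (r : ℝ → ℂ) (n : ℕ) (Q : Polynomial ℂ) : Prop :=
  Q.Monic ∧
  (∀ p : Polynomial ℂ, p.degree < n →
    ∫ x, p.eval (x : ℂ) * Q.eval (x : ℂ) * r x ∂μ = 0) ∧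
  (∀ q : Polynomial ℂ, q ≠ 0 →
    (∀ p : Polynomial ℂ, p.degree < n →
      ∫ x, p.eval (x : ℂ) * q.eval (x : ℂ) * r x ∂μ = 0) →
    Q.degree ≤ q.degree)

/-- Continuous convergence on `Ω` (equivalent to locally uniform convergence to a
continuous limit). -/
def CC (Ω : Set ℂ) (f : ℕ → ℂ → ℂ) (F : ℂ → ℂ) : Prop :=
  ∀ z ∈ Ω, Tendsto (fun p : ℕ × ℂ => f p.1 p.2) (atTop ×ˢ 𝓝 z) (𝓝 (F z))

theorem CC.const {Ω : Set ℂ} {F : ℂ → ℂ} (hF : ∀ z ∈ Ω, ContinuousAt F z) :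
    CC Ω (fun _ z => F z) F := fun z hz => (hF z hz).tendsto.comp tendsto_snd

theorem CC.seq {Ω : Set ℂ} {s : ℕ → ℂ} {w : ℂ} (hs : Tendsto s atTop (𝓝 w)) :
    CC Ω (fun n _ => s n) (fun _ => w) := fun _ _ => hs.comp tendsto_fst

theorem CC.mul {Ω : Set ℂ} {f g : ℕ → ℂ → ℂ} {F G : ℂ → ℂ} (hf : CC Ω f F) (hg : CC Ω g G) :
    CC Ω (fun n z => f n z * g n z) (fun z => F z * G z) :=
  fun z hz => (hf z hz).mul (hg z hz)

theorem CC.sub {Ω : Set ℂ} {f g : ℕ → ℂ → ℂ} {F G : ℂ → ℂ} (hf : CC Ω f F) (hg : CC Ω g G) :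
    CC Ω (fun n z => f n z - g n z) (fun z => F z - G z) :=
  fun z hz => (hf z hz).sub (hg z hz)

theorem CC.div {Ω : Set ℂ} {f g : ℕ → ℂ → ℂ} {F G : ℂ → ℂ} (hf : CC Ω f F) (hg : CC Ω g G)
    (h0 : ∀ z ∈ Ω, G z ≠ 0) :
    CC Ω (fun n z => f n z / g n z) (fun z => F z / G z) :=
  fun z hz => (hf z hz).div (hg z hz) (h0 z hz)

theorem tendsto_succ_prod (z : ℂ) :
    Tendsto (fun p : ℕ × ℂ => (p.1 + 1, p.2)) (atTop ×ˢ 𝓝 z) (atTop ×ˢ 𝓝 z) :=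
  ((tendsto_add_atTop_nat 1).comp tendsto_fst).prodMk tendsto_snd

theorem CC.succ {Ω : Set ℂ} {f : ℕ → ℂ → ℂ} {F : ℂ → ℂ} (hf : CC Ω f F) :
    CC Ω (fun n z => f (n + 1) z) F :=
  fun z hz => (hf z hz).comp (tendsto_succ_prod z)

theorem tendsto_pred_prod (z : ℂ) :
    Tendsto (fun p : ℕ × ℂ => (p.1 - 1, p.2)) (atTop ×ˢ 𝓝 z) (atTop ×ˢ 𝓝 z) :=
  ((tendsto_sub_atTop_nat 1).comp tendsto_fst).prodMk tendsto_snd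

theorem eventually_ge_prod (N : ℕ) (z : ℂ) :
    ∀ᶠ p : ℕ × ℂ in atTop ×ˢ 𝓝 z, N ≤ p.1 :=
  tendsto_fst.eventually (eventually_ge_atTop N)

theorem CC.of_succ {Ω : Set ℂ} {f : ℕ → ℂ → ℂ} {F : ℂ → ℂ}
    (hf : CC Ω (fun n z => f (n + 1) z) F) : CC Ω f F := by
  intro z hz
  refine ((hf z hz).comp (tendsto_pred_prod z)).congr' ?_
  filter_upwards [eventually_ge_prod 1 z] with p hp
  simp only [Function.comp]
  rw [Nat.sub_add_cancel hp]

theorem CC.congr {Ω : Set ℂ} {f g : ℕ → ℂ → ℂ} {F : ℂ → ℂ} (hf : CC Ω f F)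
    (h : ∀ z ∈ Ω, ∀ᶠ p : ℕ × ℂ in atTop ×ˢ 𝓝 z, f p.1 p.2 = g p.1 p.2) : CC Ω g F :=
  fun z hz => (hf z hz).congr' (h z hz)

theorem CC.congr_lim {Ω : Set ℂ} {f : ℕ → ℂ → ℂ} {F G : ℂ → ℂ} (hf : CC Ω f F)
    (h : ∀ z ∈ Ω, F z = G z) : CC Ω f G :=
  fun z hz => (h z hz) ▸ hf z hz

theorem CC.ev_ne {Ω : Set ℂ} {f : ℕ → ℂ → ℂ} {F : ℂ → ℂ} (hf : CC Ω f F) {z : ℂ} (hz : z ∈ Ω)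
    (h0 : F z ≠ 0) : ∀ᶠ p : ℕ × ℂ in atTop ×ˢ 𝓝 z, f p.1 p.2 ≠ 0 :=
  (hf z hz).eventually_ne h0

theorem CC.pt {Ω : Set ℂ} {f : ℕ → ℂ → ℂ} {F : ℂ → ℂ} (hf : CC Ω f F) {z : ℂ} (hz : z ∈ Ω) :
    Tendsto (fun n => f n z) atTop (𝓝 (F z)) :=
  (hf z hz).comp (tendsto_id.prodMk tendsto_const_nhds)

theorem ev_pt {P : ℕ × ℂ → Prop} {z : ℂ} (h : ∀ᶠ p : ℕ × ℂ in atTop ×ˢ 𝓝 z, P p) :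
    ∀ᶠ n in atTop, P (n, z) :=
  (tendsto_id.prodMk tendsto_const_nhds : Tendsto (fun n : ℕ => (n, z)) atTop _).eventually h

/-- an eventual property yields a threshold and a neighbourhood -/
theorem ev_nhds {P : ℕ × ℂ → Prop} {z : ℂ} (h : ∀ᶠ p : ℕ × ℂ in atTop ×ˢ 𝓝 z, P p) :
    ∃ N : ℕ, ∃ ρ > 0, ∀ n ≥ N, ∀ w ∈ Metric.ball z ρ, P (n, w) := by
  rw [Filter.eventually_prod_iff] at h
  obtain ⟨pa, ha, pb, hb, hab⟩ := h
  obtain ⟨N, hN⟩ := eventually_atTop.1 ha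
  obtain ⟨ρ, hρ, hb'⟩ := Metric.eventually_nhds_iff_ball.1 hb
  exact ⟨N, ρ, hρ, fun n hn w hw => hab (hN n hn) (hb' w hw)⟩

theorem ev_of_nhds {P : ℕ × ℂ → Prop} {z : ℂ} {N : ℕ} {ρ : ℝ} (hρ : 0 < ρ)
    (h : ∀ n ≥ N, ∀ w ∈ Metric.ball z ρ, P (n, w)) :
    ∀ᶠ p : ℕ × ℂ in atTop ×ˢ 𝓝 z, P p := by
  filter_upwards [(eventually_ge_atTop N).prod_mk (Metric.ball_mem_nhds z hρ)] with p hp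
  exact h p.1 hp.1 p.2 hp.2

theorem CC.tluo {Ω : Set ℂ} {f : ℕ → ℂ → ℂ} {F : ℂ → ℂ} (hf : CC Ω f F)
    (hF : ContinuousOn F Ω) : TendstoLocallyUniformlyOn f F atTop Ω := by
  rw [Metric.tendstoLocallyUniformlyOn_iff]
  intro ε hε z hz
  have h1 := (Metric.tendsto_nhds.1 (hf z hz)) (ε / 2) (half_pos hε)
  obtain ⟨N, ρ, hρ, h1⟩ := ev_nhds h1
  have h2 := (Metric.tendsto_nhds.1 (hF z hz)) (ε / 2) (half_pos hε)
  refine ⟨{x | dist (F x) (F z) < ε / 2} ∩ Metric.ball z ρ, ?_, ?_⟩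
  · exact inter_mem h2 (mem_nhdsWithin_of_mem_nhds (Metric.ball_mem_nhds z hρ))
  · filter_upwards [eventually_ge_atTop N] with n hn y hy
    have h3 := h1 n hn y hy.2
    have h4 : dist (F y) (F z) < ε / 2 := hy.1
    have h3 : dist (f n y) (F z) < ε / 2 := h3
    rw [dist_comm] at h3
    linarith [dist_triangle (F y) (F z) (f n y)]

theorem CC.of_tluo {Ω : Set ℂ} {f : ℕ → ℂ → ℂ} {F : ℂ → ℂ} (hΩ : IsOpen Ω)
    (hf : TendstoLocallyUniformlyOn f F atTop Ω)
    (hF : ContinuousOn F Ω) : CC Ω f F := by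
  intro z hz
  rw [Metric.tendsto_nhds]
  intro ε hε
  obtain ⟨t, ht, h1⟩ := (Metric.tendstoLocallyUniformlyOn_iff.1 hf) (ε / 2) (half_pos hε) z hz
  rw [hΩ.nhdsWithin_eq hz] at ht
  have h2 := (Metric.tendsto_nhds.1 (hF.continuousAt (hΩ.mem_nhds hz))) (ε / 2) (half_pos hε)
  filter_upwards [h1.prod_mk (inter_mem ht h2)] with p hp
  have h3 := hp.1 p.2 hp.2.1
  have h4 : dist (F p.2) (F z) < ε / 2 := hp.2.2
  rw [dist_comm] at h3
  linarith [dist_triangle (f p.1 p.2) (F p.2) (F z)]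

theorem CC.mono {Ω U : Set ℂ} {f : ℕ → ℂ → ℂ} {F : ℂ → ℂ} (hf : CC Ω f F) (h : U ⊆ Ω) :
    CC U f F := fun z hz => hf z (h hz)

theorem CC.compact {Ω K : Set ℂ} {f : ℕ → ℂ → ℂ} {F : ℂ → ℂ} (hf : CC Ω f F)
    (hF : ContinuousOn F Ω) (hK : IsCompact K) (hKΩ : K ⊆ Ω) :
    TendstoUniformlyOn f F atTop K :=
  (tendstoLocallyUniformlyOn_iff_tendstoUniformlyOn_of_compact hK).1 ((hf.mono hKΩ).tluo
    (hF.mono hKΩ))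

/-- divided differences converge -/
theorem CC.dslope {Ω : Set ℂ} (hΩ : IsOpen Ω) {R h : ℕ → ℂ → ℂ} {g : ℂ → ℂ} {c : ℂ}
    (hc : c ∈ Ω) (hR : CC Ω R g) (hg : DifferentiableOn ℂ g Ω)
    (h1 : ∀ z ∈ Ω, ∀ᶠ p : ℕ × ℂ in atTop ×ˢ 𝓝 z,
      h p.1 p.2 * (p.2 - c) = R p.1 p.2 - R p.1 c)
    (h2 : ∀ᶠ p : ℕ × ℂ in atTop ×ˢ 𝓝 c, DifferentiableAt ℂ (h p.1) p.2) :
    CC Ω h (dslope g c) := by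
  have hds : DifferentiableOn ℂ (_root_.dslope g c) Ω :=
    (Complex.differentiableOn_dslope (hΩ.mem_nhds hc)).2 hg
  have hoff : CC (Ω \ {c}) h (_root_.dslope g c) := by
    rintro z ⟨hz, hzc⟩
    have hzc : z ≠ c := hzc
    have e1 : Tendsto (fun p : ℕ × ℂ => (R p.1 p.2 - R p.1 c) / (p.2 - c)) (atTop ×ˢ 𝓝 z)
        (𝓝 ((g z - g c) / (z - c))) := by
      refine ((hR z hz).sub ((hR.pt hc).comp tendsto_fst)).div
        (tendsto_snd.sub tendsto_const_nhds) (sub_ne_zero.2 hzc)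
    have e2 : _root_.dslope g c z = (g z - g c) / (z - c) := by
      rw [dslope_of_ne _ hzc, slope_def_field]
    rw [e2]
    refine e1.congr' ?_
    have e3 : ∀ᶠ p : ℕ × ℂ in atTop ×ˢ 𝓝 z, p.2 ≠ c := tendsto_snd.eventually_ne hzc
    filter_upwards [h1 z hz, e3] with p hp hp2
    rw [← hp, mul_div_cancel_right₀ _ (sub_ne_zero.2 hp2)]
  intro z hz
  by_cases hzc : z ≠ c
  · exact hoff z ⟨hz, hzc⟩
  push Not at hzc
  subst hzc
  obtain ⟨N, ρ, hρ, h2⟩ := ev_nhds h2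
  obtain ⟨ρ', hρ', hb⟩ := Metric.isOpen_iff.1 hΩ z hz
  obtain ⟨t, ht0, ht⟩ : ∃ t > 0, t < min ρ ρ' := ⟨min ρ ρ' / 2, by positivity,
    half_lt_self (by positivity)⟩
  have hcb : Metric.closedBall z t ⊆ Metric.ball z ρ :=
    Metric.closedBall_subset_ball (ht.trans_le (min_le_left _ _))
  have hcb' : Metric.closedBall z t ⊆ Ω :=
    (Metric.closedBall_subset_ball (ht.trans_le (min_le_right _ _))).trans hb
  have hsph : Metric.sphere z t ⊆ Ω \ {z} := by
    intro w hw
    refine ⟨hcb' (Metric.sphere_subset_closedBall hw), ?_⟩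
    rintro rfl
    simp at hw
    exact ht0.ne hw
  have hu := hoff.compact (hds.continuousOn.mono sdiff_subset) (isCompact_sphere z t) hsph
  rw [Metric.tendsto_nhds]
  intro ε hε
  have hu := (Metric.tendstoUniformlyOn_iff.1 hu) (ε / 2) (half_pos hε)
  have hcont := (Metric.tendsto_nhds.1 (hds.continuousOn.continuousAt (hΩ.mem_nhds hz)))
    (ε / 2) (half_pos hε)
  filter_upwards [(hu.and (eventually_ge_atTop N)).prod_mk
    (inter_mem hcont (Metric.ball_mem_nhds z ht0))] with p hp
  obtain ⟨⟨hp1, hp2⟩, hp3, hp4⟩ := hp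
  have hp3 : dist (_root_.dslope g z p.2) (_root_.dslope g z z) < ε / 2 := hp3
  have hd : DiffContOnCl ℂ (fun w => h p.1 w - _root_.dslope g z w) (Metric.ball z t) := by
    apply DifferentiableOn.diffContOnCl_ball (U := Metric.closedBall z t)
    · intro w hw
      exact ((h2 p.1 hp2 w (hcb hw)).differentiableWithinAt).sub ((hds w (hcb' hw)).mono hcb')
    · exact le_rfl
  have := Complex.norm_le_of_forall_mem_frontier_norm_le Metric.isBounded_ball hd
    (C := ε / 2) (fun w hw => by
      rw [frontier_ball z ht0.ne'] at hw
      have := hp1 w hw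
      rw [dist_comm, dist_eq_norm] at this
      exact this.le) (subset_closure hp4)
  rw [← dist_eq_norm] at this
  linarith [dist_triangle (h p.1 p.2) (_root_.dslope g z p.2) (_root_.dslope g z z)]

/-- Cesaro -/
theorem CC.cesaro {Ω : Set ℂ} {f : ℕ → ℂ → ℂ} {g : ℂ → ℂ}
    (hf : CC Ω (fun n z => f (n + 1) z - f n z) g)
    (hc : ∀ z ∈ Ω, ∀ᶠ n in atTop, ContinuousAt (f n) z) :
    CC Ω (fun n z => (1 / (n : ℂ)) * f n z) g := by
  intro z hz
  rw [Metric.tendsto_nhds]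
  intro ε hε
  obtain ⟨N0, ρ, hρ, h1⟩ := ev_nhds ((Metric.tendsto_nhds.1 (hf z hz)) (ε / 2) (half_pos hε))
  obtain ⟨N, hcN, hN⟩ := ((hc z hz).and (eventually_ge_atTop N0)).exists
  set C : ℝ := ‖f N z‖ + 1 + N * ‖g z‖ with hC
  have hb : ∀ᶠ w in 𝓝 z, ‖f N w‖ < ‖f N z‖ + 1 :=
    hcN.norm.eventually (gt_mem_nhds (lt_add_one _))
  have hlim : Tendsto (fun n : ℕ => C / (n : ℝ)) atTop (𝓝 0) :=
    tendsto_const_nhds.div_atTop tendsto_natCast_atTop_atTop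
  have hlim := hlim.eventually (gt_mem_nhds (half_pos hε))
  filter_upwards [(hlim.and (eventually_ge_atTop (N + 1))).prod_mk
    (inter_mem hb (Metric.ball_mem_nhds z hρ))] with p hp
  obtain ⟨⟨hp1, hp2⟩, hp3, hp4⟩ := hp
  have hp3 : ‖f N p.2‖ < ‖f N z‖ + 1 := hp3
  obtain ⟨n, w⟩ := p
  simp only at hp1 hp2 hp3 hp4 ⊢
  have key : ∀ k : ℕ, ‖f (N + k) w - f N w - k * g z‖ ≤ k * (ε / 2) := by
    intro k
    induction k with
    | zero => simp
    | succ k ih =>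
      have h2 : dist (f (N + k + 1) w - f (N + k) w) (g z) < ε / 2 := h1 (N + k) (by omega) w hp4
      rw [dist_eq_norm] at h2
      have : f (N + (k + 1)) w - f N w - ((k + 1 : ℕ) : ℂ) * g z =
        (f (N + k) w - f N w - k * g z) + (f (N + k + 1) w - f (N + k) w - g z) := by
        push_cast; rw [← add_assoc]; ring
      rw [this]
      refine (norm_add_le _ _).trans ?_
      push_cast
      linarith
  have hk := key (n - N)
  rw [Nat.add_sub_cancel' (by omega : N ≤ n)] at hk
  have hn0 : (0 : ℝ) < n := by exact_mod_cast (by omega : 0 < n)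
  have hnC : (n : ℂ) ≠ 0 := by exact_mod_cast hn0.ne'
  have hsub : ((n - N : ℕ) : ℝ) ≤ n := by exact_mod_cast Nat.sub_le _ _
  have heq : 1 / (n : ℂ) * f n w - g z =
      (1 / (n : ℂ)) * ((f n w - f N w - ((n - N : ℕ) : ℂ) * g z) + (f N w - N * g z)) := by
    rw [Nat.cast_sub (by omega : N ≤ n)]
    field_simp
    ring
  rw [dist_eq_norm, heq, norm_mul]
  have h3 : ‖f n w - f N w - ((n - N : ℕ) : ℂ) * g z + (f N w - N * g z)‖ ≤ n * (ε / 2) + C := by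
    refine (norm_add_le _ _).trans (add_le_add (hk.trans ?_) ?_)
    · exact mul_le_mul_of_nonneg_right hsub (by positivity)
    · refine (norm_sub_le _ _).trans ?_
      rw [norm_mul, Complex.norm_natCast]
      linarith
  have h4 : ‖1 / (n : ℂ)‖ = 1 / n := by simp
  rw [h4]
  calc 1 / (n : ℝ) * _ ≤ 1 / n * (n * (ε / 2) + C) := by gcongr
    _ = ε / 2 + C / n := by field_simp
    _ < ε := by linarith

theorem msupp_null (μ : Measure ℝ) : μ (msupp μ)ᶜ = 0 := by
  apply measure_null_of_locally_null
  intro x hx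
  simp only [msupp, mem_compl_iff, mem_ofPred_eq, not_forall, not_not] at hx
  obtain ⟨U, hU, h0⟩ := hx
  exact ⟨U, mem_nhdsWithin_of_mem_nhds hU, h0⟩

theorem ae_msupp (μ : Measure ℝ) : ∀ᵐ x ∂μ, x ∈ msupp μ := msupp_null μ

theorem integ {E : Type*} [NormedAddCommGroup E] {μ : Measure ℝ} [IsFiniteMeasure μ]
    (hK : IsCompact (msupp μ)) {g : ℝ → E}
    (hg : ContinuousOn g (msupp μ)) : Integrable g μ := by
  have h := hg.integrableOn_compact hK (μ := μ)
  rwa [IntegrableOn, Measure.restrict_eq_self_of_ae_mem (ae_msupp μ)] at h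

theorem isOpen_Om {μ : Measure ℝ} (hK : IsCompact (msupp μ)) : IsOpen (msuppC μ)ᶜ :=
  (hK.image Complex.continuous_ofReal).isClosed.isOpen_compl

theorem sub_ne_of {μ : Measure ℝ} {z : ℂ} (hz : z ∈ (msuppC μ)ᶜ) {x : ℝ} (hx : x ∈ msupp μ) :
    z - (x : ℂ) ≠ 0 := by
  intro h
  exact hz ⟨x, hx, (sub_eq_zero.1 h).symm⟩

theorem dist_lb {μ : Measure ℝ} (hK : IsCompact (msupp μ)) {z : ℂ} (hz : z ∈ (msuppC μ)ᶜ) :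
    ∃ δ > 0, ∀ w ∈ Metric.ball z δ, ∀ x ∈ msupp μ, δ ≤ ‖w - (x : ℂ)‖ := by
  obtain ⟨ε, hε, hb⟩ := Metric.isOpen_iff.1 (isOpen_Om hK) z hz
  refine ⟨ε / 2, half_pos hε, fun w hw x hx => ?_⟩
  by_contra hlt
  push Not at hlt
  have hx' : (x : ℂ) ∈ Metric.ball z ε := by
    rw [Metric.mem_ball] at hw ⊢
    rw [← dist_eq_norm, dist_comm] at hlt
    linarith [dist_triangle (x : ℂ) w z]
  exact hb hx' ⟨x, hx, rfl⟩

/-- Cauchy transform -/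
noncomputable def ct (μ : Measure ℝ) (g : ℝ → ℂ) (z : ℂ) : ℂ := ∫ x, g x / (z - (x : ℂ)) ∂μ

theorem ct_cont {μ : Measure ℝ} {g : ℝ → ℂ}
    (hg : ContinuousOn g (msupp μ)) {z : ℂ} (hz : z ∈ (msuppC μ)ᶜ) :
    ContinuousOn (fun x : ℝ => g x / (z - (x : ℂ))) (msupp μ) :=
  hg.div (by fun_prop) (fun x hx => sub_ne_of hz hx)

theorem poly_cont (p : ℂ[X]) (s : Set ℝ) : ContinuousOn (fun x : ℝ => p.eval (x : ℂ)) s :=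
  (p.continuous.comp Complex.continuous_ofReal).continuousOn

theorem ct_diff {μ : Measure ℝ} [IsFiniteMeasure μ] (hK : IsCompact (msupp μ)) {g : ℝ → ℂ}
    (hg : ContinuousOn g (msupp μ)) {z : ℂ} (hz : z ∈ (msuppC μ)ᶜ) :
    DifferentiableAt ℂ (ct μ g) z := by
  obtain ⟨δ, hδ, hb⟩ := dist_lb hK hz
  have h := hasDerivAt_integral_of_dominated_loc_of_deriv_le (μ := μ) (x₀ := z)
    (s := Metric.ball z δ) (F := fun z x => g x / (z - (x : ℂ)))
    (F' := fun z x => - g x / (z - (x : ℂ)) ^ 2) (bound := fun x => ‖g x‖ / δ ^ 2)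
    (Metric.ball_mem_nhds z hδ) ?_ (integ hK (ct_cont hg hz)) ?_ ?_ ?_ ?_
  · exact h.2.differentiableAt
  · filter_upwards [(isOpen_Om hK).mem_nhds hz] with w hw
    exact (integ hK (ct_cont hg hw)).aestronglyMeasurable
  · refine (integ hK ?_).aestronglyMeasurable
    exact hg.neg.div (by fun_prop) (fun x hx => pow_ne_zero _ (sub_ne_of hz hx))
  · filter_upwards [ae_msupp μ] with x hx w hw
    rw [norm_div, norm_neg, norm_pow]
    have := hb w hw x hx
    gcongr
  · exact integ hK (hg.norm.div_const _)
  · filter_upwards [ae_msupp μ] with x hx w hw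
    have h0 : w - (x : ℂ) ≠ 0 := by
      have := hb w hw x hx
      intro h; rw [h, norm_zero] at this; linarith
    have h1 : HasDerivAt (fun w : ℂ => w - (x : ℂ)) 1 w := (hasDerivAt_id w).sub_const _
    have h2 := (hasDerivAt_const w (g x)).div h1 h0
    have e : (0 * (w - (x : ℂ)) - g x * 1) / (w - (x : ℂ)) ^ 2 = - g x / (w - (x : ℂ)) ^ 2 := by
      ring
    rw [e] at h2
    exact h2

theorem ct_sub_mul {μ : Measure ℝ} [IsFiniteMeasure μ] (hK : IsCompact (msupp μ)) {f g : ℝ → ℂ}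
    (hf : ContinuousOn f (msupp μ)) (hg : ContinuousOn g (msupp μ)) {z : ℂ}
    (hz : z ∈ (msuppC μ)ᶜ) (k : ℂ) :
    ct μ (fun x => f x - k * g x) z = ct μ f z - k * ct μ g z := by
  unfold ct
  rw [← integral_const_mul, ← integral_sub (integ hK (ct_cont hf hz))
    ((integ hK (ct_cont hg hz)).const_mul k)]
  congr 1; ext x; ring

theorem ct_poly {μ : Measure ℝ} [IsFiniteMeasure μ] (hK : IsCompact (msupp μ)) {g : ℝ → ℂ}
    (hg : ContinuousOn g (msupp μ)) {z : ℂ} (hz : z ∈ (msuppC μ)ᶜ) (P : ℂ[X]) :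
    P.eval z * ct μ g z = ct μ (fun x => P.eval (x : ℂ) * g x) z +
      ∫ x, (P /ₘ (X - C z)).eval (x : ℂ) * g x ∂μ := by
  unfold ct
  have i1 : Integrable (fun x : ℝ => (P.eval (x : ℂ) * g x) / (z - (x : ℂ))) μ :=
    integ hK (ct_cont ((poly_cont P _).mul hg) hz)
  have i2 : Integrable (fun x : ℝ => (P /ₘ (X - C z)).eval (x : ℂ) * g x) μ :=
    integ hK ((poly_cont _ _).mul hg)
  rw [← integral_const_mul, ← integral_add i1 i2]
  apply integral_congr_ae
  filter_upwards [ae_msupp μ] with x hx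
  have h0 := sub_ne_of hz hx
  have h1 := congrArg (eval (x : ℂ)) (modByMonic_add_div P (X - C z))
  rw [modByMonic_X_sub_C_eq_C_eval] at h1
  simp only [eval_add, eval_mul, eval_C, eval_sub, eval_X] at h1
  rw [← h1]
  field_simp
  ring

theorem deg_divX (P : ℂ[X]) (z : ℂ) (n : ℕ) (h : P.degree < (n + 1 : ℕ)) :
    (P /ₘ (X - C z)).degree < n := by
  by_cases hP : P.degree = 0 ∨ P = 0
  · have : P /ₘ (X - C z) = 0 := by
      rw [divByMonic_eq_zero_iff (monic_X_sub_C z), degree_X_sub_C]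
      rcases hP with h | h
      · rw [h]; exact zero_lt_one
      · rw [h]; simp
    rw [this]; simp
  · push Not at hP
    have h1 : 0 < P.degree := by
      rcases lt_trichotomy P.degree 0 with h | h | h
      · rw [degree_eq_natDegree hP.2] at h; norm_cast at h
      · exact absurd h hP.1
      · exact h
    have h2 := degree_divByMonic_lt P (X - C z) hP.2 (by rw [degree_X_sub_C]; exact zero_lt_one)
    by_cases h0 : P /ₘ (X - C z) = 0
    · rw [h0]; simp
    have hP0 := hP.2
    rw [degree_eq_natDegree hP0] at h h2
    rw [degree_eq_natDegree h0] at h2 ⊢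
    norm_cast at h h2 ⊢
    omega

/-- Bessel -/
theorem bessel {μ : Measure ℝ} [IsFiniteMeasure μ] (hK : IsCompact (msupp μ)) {l : ℕ → ℝ[X]}
    (hl : IsOrthonormalPolys μ l) {f : ℝ → ℂ} (hf : ContinuousOn f (msupp μ)) (s : Finset ℕ) :
    ∑ i ∈ s, ‖∫ x, ((l i).map (algebraMap ℝ ℂ)).eval (x : ℂ) * f x ∂μ‖ ^ 2 ≤ ∫ x, ‖f x‖ ^ 2 ∂μ := by
  have mem : ∀ g : ℝ → ℂ, ContinuousOn g (msupp μ) → MemLp g 2 μ := by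
    intro g hg
    rw [memLp_two_iff_integrable_sq_norm (integ hK hg).aestronglyMeasurable]
    exact integ hK (hg.norm.pow 2)
  have inn : ∀ g k : ℝ → ℂ, ∀ hg : MemLp g 2 μ, ∀ hk : MemLp k 2 μ,
      inner ℂ (hg.toLp g) (hk.toLp k) = ∫ x, (starRingEnd ℂ) (g x) * k x ∂μ := by
    intro g k hg hk
    rw [L2.inner_def]
    apply integral_congr_ae
    filter_upwards [hg.coeFn_toLp, hk.coeFn_toLp] with x h1 h2
    rw [h1, h2, RCLike.inner_apply, mul_comm]
  have hev : ∀ i (x : ℝ), ((l i).map (algebraMap ℝ ℂ)).eval (x : ℂ) = (((l i).eval x : ℝ) : ℂ) := by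
    intro i x
    rw [← Complex.coe_algebraMap, eval_map_apply]
  let v : ℕ → Lp ℂ 2 μ := fun i => (mem _ (poly_cont ((l i).map (algebraMap ℝ ℂ)) _)).toLp _
  have hv : Orthonormal ℂ v := by
    rw [orthonormal_iff_ite]
    intro i j
    rw [inn]
    simp only [hev, Complex.conj_ofReal, ← Complex.ofReal_mul]
    rw [integral_complex_ofReal, hl.orthonormal i j]
    split_ifs <;> simp
  have h := hv.sum_inner_products_le ((mem f hf).toLp f) (s := s)
  have hn : ‖(mem f hf).toLp f‖ ^ 2 = ∫ x, ‖f x‖ ^ 2 ∂μ := by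
    have h1 : ((‖(mem f hf).toLp f‖ ^ 2 : ℝ) : ℂ) = ((∫ x, ‖f x‖ ^ 2 ∂μ : ℝ) : ℂ) := by
      have h2 := inner_self_eq_norm_sq_to_K (𝕜 := ℂ) ((mem f hf).toLp f)
      rw [inn] at h2
      rw [← integral_complex_ofReal]
      push_cast
      refine Eq.trans h2.symm ?_
      congr 1; ext x
      rw [Complex.conj_mul']
    exact_mod_cast h1
  rw [hn] at h
  refine le_trans (le_of_eq ?_) h
  refine Finset.sum_congr rfl fun i _ => ?_
  rw [inn]
  simp only [hev, Complex.conj_ofReal]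

/-- complexified polynomials -/
noncomputable def lc (l : ℕ → ℝ[X]) (n : ℕ) : ℂ[X] := (l n).map (algebraMap ℝ ℂ)

theorem lc_eval (l : ℕ → ℝ[X]) (n : ℕ) (x : ℝ) :
    (lc l n).eval (x : ℂ) = (((l n).eval x : ℝ) : ℂ) := by
  rw [lc, ← Complex.coe_algebraMap, eval_map_apply]

theorem lc_natDegree {μ : Measure ℝ} {l : ℕ → ℝ[X]} (hl : IsOrthonormalPolys μ l) (n : ℕ) :
    (lc l n).natDegree = n := by
  rw [lc, natDegree_map, hl.natDegree_eq]

theorem lc_lead {l : ℕ → ℝ[X]} (n : ℕ) :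
    (lc l n).leadingCoeff = (((l n).leadingCoeff : ℝ) : ℂ) := by
  rw [lc, leadingCoeff_map]; rfl

theorem tau_ne {μ : Measure ℝ} {l : ℕ → ℝ[X]} (hl : IsOrthonormalPolys μ l) (n : ℕ) :
    (((l n).leadingCoeff : ℝ) : ℂ) ≠ 0 := by
  exact_mod_cast (hl.leadingCoeff_pos n).ne'

theorem lc_ne {μ : Measure ℝ} {l : ℕ → ℝ[X]} (hl : IsOrthonormalPolys μ l) (n : ℕ) :
    lc l n ≠ 0 := by
  intro h
  have := lc_lead (l := l) n
  rw [h, leadingCoeff_zero] at this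
  exact tau_ne hl n this.symm

theorem lc_on {μ : Measure ℝ} {l : ℕ → ℝ[X]} (hl : IsOrthonormalPolys μ l) (m n : ℕ) :
    ∫ x : ℝ, (lc l m).eval (x : ℂ) * (lc l n).eval (x : ℂ) ∂μ = if m = n then 1 else 0 := by
  simp only [lc_eval, ← Complex.ofReal_mul]
  rw [integral_complex_ofReal, hl.orthonormal]
  split_ifs <;> simp

theorem lc_orth {μ : Measure ℝ} [IsFiniteMeasure μ] (hK : IsCompact (msupp μ))
    {l : ℕ → ℝ[X]} (hl : IsOrthonormalPolys μ l) (n : ℕ) :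
    ∀ m ≤ n, ∀ p : ℂ[X], p.degree < m → ∫ x : ℝ, p.eval (x : ℂ) * (lc l n).eval (x : ℂ) ∂μ = 0 := by
  intro m
  induction m with
  | zero =>
    intro _ p hp
    have : p = 0 := by
      by_contra h
      rw [degree_eq_natDegree h] at hp
      norm_cast at hp
    simp [this]
  | succ m ih =>
    intro hm p hp
    set k : ℂ := p.coeff m / (l m).leadingCoeff with hk
    have hq : (p - C k * lc l m).degree < m := by
      rw [degree_lt_iff_coeff_zero]
      intro j hj
      rw [coeff_sub, coeff_C_mul]
      rcases hj.eq_or_lt with rfl | hj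
      · have : (lc l m).coeff m = (((l m).leadingCoeff : ℝ) : ℂ) := by
          rw [← lc_lead, leadingCoeff, lc_natDegree hl]
        rw [this, hk, div_mul_cancel₀ _ (tau_ne hl m), sub_self]
      · rw [coeff_eq_zero_of_natDegree_lt (p := lc l m) (by rw [lc_natDegree hl]; exact hj),
          (degree_lt_iff_coeff_zero _ _).1 hp j (by omega)]
        simp
    have h1 := ih (by omega) _ hq
    have h2 := lc_on hl m n
    rw [if_neg (by omega)] at h2
    have e : ∀ x : ℝ, p.eval (x : ℂ) * (lc l n).eval (x : ℂ) =
        (p - C k * lc l m).eval (x : ℂ) * (lc l n).eval (x : ℂ) +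
        k * ((lc l m).eval (x : ℂ) * (lc l n).eval (x : ℂ)) := by
      intro x; simp; ring
    simp_rw [e]
    rw [integral_add, integral_const_mul, h1, h2]
    · simp
    · exact integ hK ((poly_cont _ _).mul (poly_cont _ _))
    · exact (integ hK ((poly_cont _ _).mul (poly_cont _ _))).const_mul _

/-- Green function -/
noncomputable def GG (μ : Measure ℝ) (l : ℕ → ℝ[X]) (n m : ℕ) (z : ℂ) : ℂ :=
  ct μ (fun x : ℝ => (lc l n).eval (x : ℂ) * (lc l m).eval (x : ℂ)) z

theorem GG_comm (μ : Measure ℝ) (l : ℕ → ℝ[X]) (n m : ℕ) (z : ℂ) :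
    GG μ l n m z = GG μ l m n z := by
  unfold GG; congr 1; ext x; ring

theorem lc_rec {μ : Measure ℝ} {l : ℕ → ℝ[X]} {a b : ℕ → ℝ} (hM : IsM01 μ l a b) (m : ℕ) (x : ℂ) :
    x * (lc l (m + 1)).eval x = a (m + 2) * (lc l (m + 2)).eval x + b (m + 1) * (lc l (m + 1)).eval x
      + a (m + 1) * (lc l m).eval x := by
  have h := congrArg (fun p : ℝ[X] => (p.map (algebraMap ℝ ℂ)).eval x) (hM.recurrence m)
  simpa [lc, smul_eq_C_mul] using h

theorem GG_rec {μ : Measure ℝ} [IsFiniteMeasure μ] (hK : IsCompact (msupp μ))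
    {l : ℕ → ℝ[X]} {a b : ℕ → ℝ} (hM : IsM01 μ l a b) (n m : ℕ) {z : ℂ} (hz : z ∈ (msuppC μ)ᶜ) :
    z * GG μ l n (m + 1) z = a (m + 2) * GG μ l n (m + 2) z + b (m + 1) * GG μ l n (m + 1) z
      + a (m + 1) * GG μ l n m z + if n = m + 1 then 1 else 0 := by
  have hc : ∀ k, Integrable (fun x : ℝ => (lc l n).eval (x : ℂ) * (lc l k).eval (x : ℂ) / (z - (x : ℂ))) μ :=
    fun k => integ hK (ct_cont ((poly_cont _ _).mul (poly_cont _ _)) hz)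
  have hc' : Integrable (fun x : ℝ => (lc l n).eval (x : ℂ) * (lc l (m + 1)).eval (x : ℂ)) μ :=
    integ hK ((poly_cont _ _).mul (poly_cont _ _))
  rw [← lc_on hM.onp n (m + 1)]
  unfold GG ct
  rw [← integral_const_mul, ← integral_const_mul, ← integral_const_mul, ← integral_const_mul,
    ← integral_add ((hc _).const_mul _) ((hc _).const_mul _), ← integral_add _ ((hc _).const_mul _),
    ← integral_add _ hc']
  · apply integral_congr_ae
    filter_upwards [ae_msupp μ] with x hx
    have h0 := sub_ne_of hz hx
    have h1 := lc_rec hM m (x : ℂ)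
    simp only [← mul_div_assoc, ← add_div]
    rw [← sub_eq_zero]
    field_simp
    linear_combination ((lc l n).eval (x : ℂ)) * h1
  · exact (((hc _).const_mul _).add ((hc _).const_mul _)).add ((hc _).const_mul _)
  · exact ((hc _).const_mul _).add ((hc _).const_mul _)

theorem GG_bessel {μ : Measure ℝ} [IsFiniteMeasure μ] (hK : IsCompact (msupp μ))
    {l : ℕ → ℝ[X]} (hl : IsOrthonormalPolys μ l) (n : ℕ) {z : ℂ} {δ : ℝ} (hδ : 0 < δ)
    (hz : ∀ x ∈ msupp μ, δ ≤ ‖z - (x : ℂ)‖) (s : Finset ℕ) :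
    ∑ i ∈ s, ‖GG μ l n i z‖ ^ 2 ≤ (1 / δ) ^ 2 := by
  have hzΩ : z ∈ (msuppC μ)ᶜ := by
    rintro ⟨x, hx, rfl⟩
    have := hz x hx
    simp at this; linarith
  have hcont := ct_cont (poly_cont (lc l n) (msupp μ)) hzΩ
  have h := bessel hK hl hcont s
  have e : ∀ i, GG μ l n i z = ∫ x, ((l i).map (algebraMap ℝ ℂ)).eval (x : ℂ) *
      ((lc l n).eval (x : ℂ) / (z - (x : ℂ))) ∂μ := by
    intro i; unfold GG ct lc; congr 1; ext x; ring
  simp_rw [e]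
  refine h.trans ?_
  have h2 : ∫ x : ℝ, (l n).eval x * (l n).eval x ∂μ = 1 := by rw [hl.orthonormal]; simp
  calc ∫ x : ℝ, ‖(lc l n).eval (x : ℂ) / (z - (x : ℂ))‖ ^ 2 ∂μ
      ≤ ∫ x : ℝ, (1 / δ) ^ 2 * ((l n).eval x * (l n).eval x) ∂μ := by
        apply integral_mono_ae
        · exact integ hK (hcont.norm.pow 2)
        · refine integ hK ?_
          exact ((continuous_const).mul ((l n).continuous.mul (l n).continuous)).continuousOn
        · filter_upwards [ae_msupp μ] with x hx
          have := hz x hx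
          rw [lc_eval, norm_div, Complex.norm_real, div_pow, Real.norm_eq_abs, sq_abs, ← pow_two,
            div_pow, one_pow, div_mul_eq_mul_div, one_mul]
          gcongr
    _ = (1 / δ) ^ 2 := by rw [integral_const_mul, h2, mul_one]

theorem decay_seq {u : ℕ → ℂ} {z lam : ℂ} (h0 : lam ≠ 0) (h1 : ‖lam‖ ≤ 1)
    (hz : lam + lam⁻¹ = 2 * z) (hu : ∀ j, u (j + 2) = 2 * z * u (j + 1) - u j)
    (hlim : Tendsto u atTop (𝓝 0)) (j : ℕ) : u j = lam ^ j * u 0 := by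
  have hD : ∀ j, u (j + 1) - lam * u j = lam⁻¹ ^ j * (u 1 - lam * u 0) := by
    intro j
    induction j with
    | zero => simp
    | succ j ih =>
      rw [pow_succ, mul_assoc, mul_comm lam⁻¹, ← mul_assoc, ← ih, hu j, ← hz]
      field_simp
      ring
  have hD0 : u 1 - lam * u 0 = 0 := by
    have hl : Tendsto (fun j => ‖u (j + 1) - lam * u j‖) atTop (𝓝 0) := by
      have := ((hlim.comp (tendsto_add_atTop_nat 1)).sub (hlim.const_mul lam)).norm
      simpa using this
    have hge : ∀ j, ‖u 1 - lam * u 0‖ ≤ ‖u (j + 1) - lam * u j‖ := by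
      intro j
      rw [hD j, norm_mul, norm_pow, norm_inv]
      have : 1 ≤ ‖lam‖⁻¹ := (one_le_inv₀ (norm_pos_iff.2 h0)).2 h1
      exact le_mul_of_one_le_left (norm_nonneg _) (one_le_pow₀ this)
    exact norm_le_zero_iff.1 (ge_of_tendsto' hl hge)
  induction j with
  | zero => simp
  | succ j ih =>
    have := hD j
    rw [hD0, mul_zero, sub_eq_zero] at this
    rw [this, ih]; ring

theorem tendsto_zero_of_sum_sq {u : ℕ → ℂ} {C : ℝ} (h : ∀ N, ∑ i ∈ Finset.range N, ‖u i‖ ^ 2 ≤ C) :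
    Tendsto u atTop (𝓝 0) := by
  have hs : Summable (fun i => ‖u i‖ ^ 2) :=
    summable_of_sum_range_le (fun _ => by positivity) h
  have h1 := hs.tendsto_atTop_zero
  have h2 := h1.sqrt
  simp only [Real.sqrt_sq (norm_nonneg _), Real.sqrt_zero] at h2
  exact tendsto_zero_iff_norm_tendsto_zero.2 h2

theorem core {μ : Measure ℝ} [IsFiniteMeasure μ] (hK : IsCompact (msupp μ))
    {l : ℕ → ℝ[X]} {a b : ℕ → ℝ} (hM : IsM01 μ l a b) {z lam : ℂ} (hz : z ∈ (msuppC μ)ᶜ)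
    (h0 : lam ≠ 0) (h1 : ‖lam‖ ≤ 1) (hlz : lam + lam⁻¹ = 2 * z)
    (U : Ultrafilter (ℕ × ℂ)) (hU : (U : Filter (ℕ × ℂ)) ≤ atTop ×ˢ 𝓝 z) :
    ∃ g : ℂ, ‖lam‖ < 1 ∧ g * (z - lam) = 1 ∧
      Tendsto (fun p : ℕ × ℂ => GG μ l p.1 p.1 p.2) U (𝓝 g) ∧
      Tendsto (fun p : ℕ × ℂ => GG μ l p.1 (p.1 + 1) p.2) U (𝓝 (lam * g)) := by
  obtain ⟨δ, hδ, hb⟩ := dist_lb hK hz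
  have hball : ∀ᶠ p : ℕ × ℂ in U, p.2 ∈ Metric.ball z δ :=
    hU (tendsto_snd.eventually (Metric.ball_mem_nhds z hδ))
  have hOm : ∀ᶠ p : ℕ × ℂ in U, p.2 ∈ (msuppC μ)ᶜ :=
    hU (tendsto_snd.eventually ((isOpen_Om hK).mem_nhds hz))
  have hfst : Tendsto (fun p : ℕ × ℂ => p.1) U atTop := tendsto_fst.mono_left hU
  have hsnd : Tendsto (fun p : ℕ × ℂ => p.2) U (𝓝 z) := tendsto_snd.mono_left hU
  have hge : ∀ N, ∀ᶠ p : ℕ × ℂ in U, N ≤ p.1 := fun N => hfst.eventually (eventually_ge_atTop N)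
  have hbd : ∀ p : ℕ × ℂ, p.2 ∈ Metric.ball z δ → ∀ s : Finset ℕ,
      ∑ i ∈ s, ‖GG μ l p.1 i p.2‖ ^ 2 ≤ (1 / δ) ^ 2 := fun p hp s =>
    GG_bessel hK hM.onp p.1 hδ (hb p.2 hp) s
  have hlimex : ∀ k : ℕ → ℕ, ∃ g : ℂ, Tendsto (fun p : ℕ × ℂ => GG μ l p.1 (k p.1) p.2) U (𝓝 g) := by
    intro k
    have hc := isCompact_closedBall (0 : ℂ) (1 / δ)
    obtain ⟨g, -, hg⟩ := hc.ultrafilter_le_nhds (U.map (fun p : ℕ × ℂ => GG μ l p.1 (k p.1) p.2)) (by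
      rw [le_principal_iff]
      change ∀ᶠ p : ℕ × ℂ in U, _
      filter_upwards [hball] with p hp
      have := hbd p hp {k p.1}
      rw [Finset.sum_singleton] at this
      have := (pow_le_pow_iff_left₀ (norm_nonneg _) (by positivity) two_ne_zero).1 this
      simpa using this)
    exact ⟨g, hg⟩
  choose u hu using fun j : ℕ => hlimex (fun n => n + j)
  choose v hv using fun j : ℕ => hlimex (fun n => n - j)
  have hA : ∀ k : ℕ × ℂ → ℕ, Tendsto k U atTop →
      Tendsto (fun p : ℕ × ℂ => ((a (k p) : ℝ) : ℂ)) U (𝓝 (1 / 2)) := by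
    intro k hk
    have := (Complex.continuous_ofReal.tendsto _).comp (hM.tendsto_a.comp hk)
    simpa [Function.comp_def] using this
  have hB : ∀ k : ℕ × ℂ → ℕ, Tendsto k U atTop →
      Tendsto (fun p : ℕ × ℂ => ((b (k p) : ℝ) : ℂ)) U (𝓝 0) := by
    intro k hk
    have := (Complex.continuous_ofReal.tendsto _).comp (hM.tendsto_b.comp hk)
    simpa [Function.comp_def] using this
  have hadd : ∀ j, Tendsto (fun p : ℕ × ℂ => p.1 + j) U atTop := fun j =>
    (tendsto_add_atTop_nat j).comp hfst
  have hsub : ∀ j, Tendsto (fun p : ℕ × ℂ => p.1 - j) U atTop := fun j =>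
    (tendsto_sub_atTop_nat j).comp hfst
  -- recurrences
  have hurec : ∀ j, u (j + 2) = 2 * z * u (j + 1) - u j := by
    intro j
    have hL := hsnd.mul (hu (j + 1))
    have hR := ((((hA _ (hadd (j + 2))).mul (hu (j + 2))).add
      ((hB _ (hadd (j + 1))).mul (hu (j + 1)))).add ((hA _ (hadd (j + 1))).mul (hu j)))
    have := tendsto_nhds_unique_of_eventuallyEq hL hR (by
      filter_upwards [hOm] with p hp
      have := GG_rec hK hM p.1 (p.1 + j) hp
      rw [if_neg (by omega), add_zero] at this
      exact this)
    linear_combination -2 * this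
  have hvrec : ∀ j, v (j + 2) = 2 * z * v (j + 1) - v j := by
    intro j
    have hL := hsnd.mul (hv (j + 1))
    have hR := ((((hA _ (hsub j)).mul (hv j)).add
      ((hB _ (hsub (j + 1))).mul (hv (j + 1)))).add ((hA _ (hsub (j + 1))).mul (hv (j + 2))))
    have := tendsto_nhds_unique_of_eventuallyEq hL hR (by
      filter_upwards [hOm, hge (j + 2)] with p hp hpj
      have := GG_rec hK hM p.1 (p.1 - (j + 2)) hp
      rw [if_neg (by omega), add_zero, show p.1 - (j + 2) + 2 = p.1 - j by omega,
        show p.1 - (j + 2) + 1 = p.1 - (j + 1) by omega] at this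
      exact this)
    linear_combination -2 * this
  have hcrec : z * u 0 = 1 / 2 * u 1 + 1 / 2 * v 1 + 1 := by
    have hL := hsnd.mul (hu 0)
    have hR := (((((hA _ (hadd 1)).mul (hu 1)).add
      ((hB _ (hadd 0)).mul (hu 0))).add ((hA _ (hadd 0)).mul (hv 1)))).add_const 1
    have := tendsto_nhds_unique_of_eventuallyEq hL hR (by
      filter_upwards [hOm, hge 1] with p hp hpj
      have := GG_rec hK hM p.1 (p.1 - 1) hp
      rw [if_pos (by omega), show p.1 - 1 + 2 = p.1 + 1 by omega,
        show p.1 - 1 + 1 = p.1 by omega] at this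
      exact this)
    linear_combination this
  have huv : v 0 = u 0 := tendsto_nhds_unique (hv 0) (hu 0)
  -- decay
  have hu0 : Tendsto u atTop (𝓝 0) := by
    apply tendsto_zero_of_sum_sq (C := (1 / δ) ^ 2)
    intro N
    refine le_of_tendsto (tendsto_finsetSum (Finset.range N) fun i _ => ((hu i).norm.pow 2)) ?_
    filter_upwards [hball] with p hp
    have := hbd p hp ((Finset.range N).image (fun i => p.1 + i))
    rw [Finset.sum_image (by intro x _ y _ hxy; simpa using hxy)] at this
    exact this
  have hv0 : Tendsto v atTop (𝓝 0) := by
    apply tendsto_zero_of_sum_sq (C := (1 / δ) ^ 2)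
    intro N
    refine le_of_tendsto (tendsto_finsetSum (Finset.range N) fun i _ => ((hv i).norm.pow 2)) ?_
    filter_upwards [hball, hge N] with p hp hpN
    have := hbd p hp ((Finset.range N).image (fun i => p.1 - i))
    rw [Finset.sum_image (by
      intro x hx y hy hxy
      simp at hx hy hxy
      omega)] at this
    exact this
  have eu := decay_seq h0 h1 hlz hurec hu0
  have ev := decay_seq h0 h1 hlz hvrec hv0
  have e1 : u 1 = lam * u 0 := by simpa using eu 1
  have e2 : v 1 = lam * u 0 := by simpa [huv] using ev 1
  have hg : u 0 * (z - lam) = 1 := by rw [e1, e2] at hcrec; linear_combination hcrec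
  refine ⟨u 0, ?_, hg, hu 0, e1 ▸ hu 1⟩
  by_contra hlt
  have hl1 : ‖lam‖ = 1 := le_antisymm h1 (not_lt.1 hlt)
  have hn : Tendsto (fun j => ‖u j‖) atTop (𝓝 ‖u 0‖) := by
    refine tendsto_const_nhds.congr fun j => ?_
    rw [eu j, norm_mul, norm_pow, hl1, one_pow, one_mul]
  have := tendsto_nhds_unique hn (by simpa using hu0.norm)
  rw [norm_eq_zero.1 this, zero_mul] at hg
  exact zero_ne_one hg

/-- Facts about `φ` and `√(z²-1)` on the complement of the support. -/
structure PhiFacts (Ω : Set ℂ) : Prop where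
  ne : ∀ z ∈ Ω, z ≠ 0
  sq : ∀ z ∈ Ω, sqrtB z ^ 2 = z ^ 2 - 1
  lt : ∀ z ∈ Ω, 1 < ‖phi z‖
  sne : ∀ z ∈ Ω, sqrtB z ≠ 0
  diff : ∀ z ∈ Ω, DifferentiableAt ℂ sqrtB z

theorem sqrtB_sq {z : ℂ} (hz : z ≠ 0) : sqrtB z ^ 2 = z ^ 2 - 1 := by
  unfold sqrtB
  have h : ((1 - 1 / z ^ 2) ^ ((1 : ℂ) / 2)) ^ 2 = 1 - 1 / z ^ 2 := by
    have := Complex.cpow_nat_inv_pow (1 - 1 / z ^ 2) (n := 2) two_ne_zero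
    rwa [Nat.cast_ofNat, ← one_div] at this
  rw [mul_pow, h]
  field_simp

theorem re_cpow_half_nonneg (w : ℂ) : 0 ≤ (w ^ ((1 : ℂ) / 2)).re := by
  by_cases hw : w = 0
  · simp [hw]
  rw [Complex.cpow_def_of_ne_zero hw, Complex.exp_re]
  apply mul_nonneg (Real.exp_pos _).le
  have : (Complex.log w * (1 / 2)).im = Complex.arg w / 2 := by
    rw [show (1 / 2 : ℂ) = ((1 / 2 : ℝ) : ℂ) by push_cast; rfl, Complex.im_mul_ofReal, Complex.log_im]
    ring
  rw [this]
  apply Real.cos_nonneg_of_neg_pi_div_two_le_of_le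
  · linarith [Complex.neg_pi_lt_arg w]
  · linarith [Complex.arg_le_pi w]

theorem phi_mul_lam {z : ℂ} (hz : z ≠ 0) : phi z * (z - sqrtB z) = 1 := by
  unfold phi
  linear_combination -sqrtB_sq hz

theorem norm_sub_le_add {s : ℂ} (hs : 0 ≤ s.re) : ‖1 - s‖ ≤ ‖1 + s‖ := by
  rw [← pow_le_pow_iff_left₀ (norm_nonneg _) (norm_nonneg _) two_ne_zero, ← Complex.normSq_eq_norm_sq,
    ← Complex.normSq_eq_norm_sq, Complex.normSq_apply, Complex.normSq_apply]
  simp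
  nlinarith

theorem norm_lam_le {z : ℂ} (hz : z ≠ 0) : ‖z - sqrtB z‖ ≤ 1 := by
  have h1 : ‖z - sqrtB z‖ ≤ ‖phi z‖ := by
    have e1 : z - sqrtB z = z * (1 - (1 - 1 / z ^ 2) ^ ((1 : ℂ) / 2)) := by unfold sqrtB; ring
    have e2 : phi z = z * (1 + (1 - 1 / z ^ 2) ^ ((1 : ℂ) / 2)) := by unfold phi sqrtB; ring
    rw [e1, e2, norm_mul, norm_mul]
    exact mul_le_mul_of_nonneg_left (norm_sub_le_add (re_cpow_half_nonneg _)) (norm_nonneg _)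
  have h2 : ‖phi z‖ * ‖z - sqrtB z‖ = 1 := by rw [← norm_mul, phi_mul_lam hz, norm_one]
  nlinarith [norm_nonneg (z - sqrtB z), norm_nonneg (phi z)]

theorem slit_of {z : ℂ} (hz : z ≠ 0) (h : ‖z - sqrtB z‖ < 1) : 1 - 1 / z ^ 2 ∈ Complex.slitPlane := by
  by_contra hn
  set w := 1 - 1 / z ^ 2 with hw
  set s := w ^ ((1 : ℂ) / 2) with hs
  have hss : s ^ 2 = w := by
    have := Complex.cpow_nat_inv_pow w (n := 2) two_ne_zero
    rwa [Nat.cast_ofNat, ← one_div] at this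
  rw [Complex.mem_slitPlane_iff, not_or, not_lt, not_not] at hn
  have hre : s.re = 0 := by
    have h1 := congrArg Complex.re hss
    have h2 := congrArg Complex.im hss
    rw [pow_two, Complex.mul_re] at h1
    rw [pow_two, Complex.mul_im, hn.2] at h2
    have h3 : s.re * s.im = 0 := by linarith
    rcases mul_eq_zero.1 h3 with h | h
    · exact h
    · rw [h] at h1; nlinarith [hn.1]
  have h4 : ‖1 + s‖ ≤ ‖1 - s‖ := by
    have := norm_sub_le_add (s := -s) (by simp [hre])
    simpa [sub_eq_add_neg] using this
  have h1 : ‖phi z‖ ≤ ‖z - sqrtB z‖ := by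
    have e1 : z - sqrtB z = z * (1 - s) := by rw [hs, hw]; unfold sqrtB; ring
    have e2 : phi z = z * (1 + s) := by rw [hs, hw]; unfold phi sqrtB; ring
    rw [e1, e2, norm_mul, norm_mul]
    exact mul_le_mul_of_nonneg_left h4 (norm_nonneg _)
  have h2 : ‖phi z‖ * ‖z - sqrtB z‖ = 1 := by rw [← norm_mul, phi_mul_lam hz, norm_one]
  nlinarith [norm_nonneg (z - sqrtB z), norm_nonneg (phi z)]

theorem lam_eq {z : ℂ} (hz : z ≠ 0) : z - sqrtB z = (phi z)⁻¹ :=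
  eq_inv_of_mul_eq_one_right (phi_mul_lam hz)

theorem lam_add {z : ℂ} (hz : z ≠ 0) : (z - sqrtB z) + (z - sqrtB z)⁻¹ = 2 * z := by
  have : (z - sqrtB z)⁻¹ = phi z := by rw [lam_eq hz, inv_inv]
  rw [this, phi]; ring

theorem lam_ne {z : ℂ} (hz : z ≠ 0) : z - sqrtB z ≠ 0 :=
  right_ne_zero_of_mul (by rw [phi_mul_lam hz]; exact one_ne_zero)

theorem phiFacts {μ : Measure ℝ} [IsFiniteMeasure μ] (hK : IsCompact (msupp μ))
    {l : ℕ → ℝ[X]} {a b : ℕ → ℝ} (hM : IsM01 μ l a b) : PhiFacts (msuppC μ)ᶜ := by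
  have hne : ∀ z ∈ (msuppC μ)ᶜ, z ≠ 0 := by
    rintro z hz rfl
    obtain ⟨g, h1, -⟩ := core hK hM hz (lam := Complex.I) Complex.I_ne_zero (by simp) (by simp)
      (Ultrafilter.of (atTop ×ˢ 𝓝 0)) (Ultrafilter.of_le _)
    simp at h1
  have hc : ∀ z ∈ (msuppC μ)ᶜ, ‖z - sqrtB z‖ < 1 ∧ sqrtB z ≠ 0 := by
    intro z hz
    have hz0 := hne z hz
    obtain ⟨g, h1, h2, -⟩ := core hK hM hz (lam := z - sqrtB z) (lam_ne hz0) (norm_lam_le hz0)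
      (lam_add hz0) (Ultrafilter.of (atTop ×ˢ 𝓝 z)) (Ultrafilter.of_le _)
    refine ⟨h1, fun h => ?_⟩
    rw [h] at h2; simp at h2
  refine ⟨hne, fun z hz => sqrtB_sq (hne z hz), ?_, fun z hz => (hc z hz).2, ?_⟩
  · intro z hz
    have h2 : ‖phi z‖ * ‖z - sqrtB z‖ = 1 := by
      rw [← norm_mul, phi_mul_lam (hne z hz), norm_one]
    have := (hc z hz).1
    nlinarith [norm_nonneg (z - sqrtB z), norm_nonneg (phi z)]
  · intro z hz
    have hz0 := hne z hz
    have := slit_of hz0 (hc z hz).1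
    unfold sqrtB
    refine differentiableAt_id.mul (DifferentiableAt.cpow_const ?_ this)
    exact (differentiableAt_const _).sub ((differentiableAt_const _).div
      (differentiableAt_id.pow 2) (pow_ne_zero 2 hz0))

theorem PhiFacts.phi_ne {Ω : Set ℂ} (h : PhiFacts Ω) {z : ℂ} (hz : z ∈ Ω) : phi z ≠ 0 :=
  norm_pos_iff.1 (zero_lt_one.trans (h.lt z hz))

theorem PhiFacts.phi_diff {Ω : Set ℂ} (h : PhiFacts Ω) {z : ℂ} (hz : z ∈ Ω) :
    DifferentiableAt ℂ phi z := differentiableAt_id.add (h.diff z hz)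

theorem PhiFacts.phi_quad {Ω : Set ℂ} (h : PhiFacts Ω) {z : ℂ} (hz : z ∈ Ω) :
    phi z ^ 2 + 1 = 2 * z * phi z := by
  unfold phi
  linear_combination h.sq z hz

theorem PhiFacts.inj {Ω : Set ℂ} (h : PhiFacts Ω) {z w : ℂ} (hz : z ∈ Ω) (hw : w ∈ Ω)
    (he : phi z = phi w) : z = w := by
  have h1 := h.phi_quad hz
  have h2 := h.phi_quad hw
  rw [he] at h1
  have h3 := h.phi_ne hw
  have : (z - w) * (2 * phi w) = 0 := by linear_combination h2 - h1
  rcases mul_eq_zero.1 this with h4 | h4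
  · exact sub_eq_zero.1 h4
  · simp [h3] at h4

theorem PhiFacts.deriv_phi {Ω : Set ℂ} (hΩ : IsOpen Ω) (h : PhiFacts Ω) {z : ℂ} (hz : z ∈ Ω) :
    HasDerivAt phi (phi z / sqrtB z) z := by
  have hd := (h.phi_diff hz).hasDerivAt
  have h1 : HasDerivAt (fun w => phi w ^ 2 + 1) (2 * phi z * deriv phi z) z := by
    have := (hd.pow 2).add_const 1
    simpa using this
  have h2 : HasDerivAt (fun w => 2 * w * phi w) (2 * phi z + 2 * z * deriv phi z) z := by
    have := (((hasDerivAt_id z).const_mul 2).mul hd)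
    simp only [id, mul_one] at this
    exact this
  have h3 : (fun w => phi w ^ 2 + 1) =ᶠ[𝓝 z] (fun w => 2 * w * phi w) := by
    filter_upwards [hΩ.mem_nhds hz] with w hw using h.phi_quad hw
  have h4 := h2.unique (h1.congr_of_eventuallyEq h3.symm)
  have h5 : phi z - z = sqrtB z := by unfold phi; ring
  have h6 : deriv phi z = phi z / sqrtB z := by
    rw [eq_div_iff (h.sne z hz), ← h5]
    linear_combination -h4 / 2
  rwa [h6] at hd

/-- The inductive package: asymptotics of the polynomials `P n` orthogonal w.r.t. `r dμ`. -/
structure Good (μ : Measure ℝ) (r : ℝ → ℂ) (P : ℕ → ℂ[X]) : Prop where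
  cont : ContinuousOn r (msupp μ)
  monic : ∀ᶠ n in atTop, (P n).Monic ∧ (P n).natDegree = n
  orth : ∀ᶠ n : ℕ in atTop, ∀ p : ℂ[X], p.degree < n →
    ∫ x : ℝ, p.eval (x : ℂ) * (P n).eval (x : ℂ) * r x ∂μ = 0
  uniq : ∀ᶠ n : ℕ in atTop, ∀ q : ℂ[X], q.degree < n → (∀ p : ℂ[X], p.degree < n →
    ∫ x : ℝ, p.eval (x : ℂ) * q.eval (x : ℂ) * r x ∂μ = 0) → q = 0
  ratio : CC (msuppC μ)ᶜ (fun n z => (P (n + 1)).eval z / (P n).eval z) (fun z => phi z / 2)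
  qratio : CC (msuppC μ)ᶜ
    (fun n z => ct μ (fun x : ℝ => (P (n + 1)).eval (x : ℂ) * r x) z /
      ct μ (fun x : ℝ => (P n).eval (x : ℂ) * r x) z) (fun z => 1 / (2 * phi z))
  inf : ∀ M : ℝ, ∃ R : ℝ, ∃ N : ℕ, ∀ n ≥ N, ∀ z : ℂ, R ≤ ‖z‖ →
    (P n).eval z ≠ 0 ∧ M * ‖(P n).eval z‖ ≤ ‖(P (n + 1)).eval z‖

theorem GG_lim {μ : Measure ℝ} [IsFiniteMeasure μ] (hK : IsCompact (msupp μ))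
    {l : ℕ → ℝ[X]} {a b : ℕ → ℝ} (hM : IsM01 μ l a b) :
    CC (msuppC μ)ᶜ (fun n z => GG μ l n n z) (fun z => 1 / sqrtB z) ∧
    CC (msuppC μ)ᶜ (fun n z => GG μ l n (n + 1) z) (fun z => 1 / (phi z * sqrtB z)) := by
  have hf := phiFacts hK hM
  have key : ∀ z ∈ (msuppC μ)ᶜ, ∀ U : Ultrafilter (ℕ × ℂ), (U : Filter (ℕ × ℂ)) ≤ atTop ×ˢ 𝓝 z →
      Tendsto (fun p : ℕ × ℂ => GG μ l p.1 p.1 p.2) U (𝓝 (1 / sqrtB z)) ∧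
      Tendsto (fun p : ℕ × ℂ => GG μ l p.1 (p.1 + 1) p.2) U (𝓝 (1 / (phi z * sqrtB z))) := by
    intro z hz U hU
    have hz0 := hf.ne z hz
    obtain ⟨g, h1, h2, h3, h4⟩ := core hK hM hz (lam := z - sqrtB z) (lam_ne hz0) (norm_lam_le hz0)
      (lam_add hz0) U hU
    have hg : g = 1 / sqrtB z := by
      rw [eq_div_iff (hf.sne z hz), ← h2]; ring
    rw [lam_eq hz0, hg] at h4
    rw [hg] at h3
    refine ⟨h3, ?_⟩
    convert h4 using 2
    have := hf.phi_ne hz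
    have := hf.sne z hz
    field_simp
  constructor
  · intro z hz
    rw [tendsto_iff_ultrafilter]
    exact fun U hU => (key z hz U hU).1
  · intro z hz
    rw [tendsto_iff_ultrafilter]
    exact fun U hU => (key z hz U hU).2

theorem tau_rec {μ : Measure ℝ} {l : ℕ → ℝ[X]} {a b : ℕ → ℝ} (hM : IsM01 μ l a b) (m : ℕ) :
    (l m).leadingCoeff = a (m + 1) * (l (m + 1)).leadingCoeff := by
  have hd := hM.onp.natDegree_eq
  have e : ∀ n, (l n).coeff n = (l n).leadingCoeff := fun n => by rw [leadingCoeff, hd]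
  have z1 : ∀ n k, n < k → (l n).coeff k = 0 := fun n k h =>
    coeff_eq_zero_of_natDegree_lt (by rw [hd]; exact h)
  rcases m with _ | m
  · have h := congrArg (fun p : ℝ[X] => p.coeff 1) hM.recurrence_zero
    simp only [coeff_X_mul, coeff_add, coeff_smul, smul_eq_mul] at h
    rw [e, e 1, z1 0 1 (by omega)] at h
    linarith
  · have h := congrArg (fun p : ℝ[X] => p.coeff (m + 2)) (hM.recurrence m)
    simp only [coeff_X_mul, coeff_add, coeff_smul, smul_eq_mul] at h
    rw [e, e (m + 2), z1 (m + 1) (m + 2) (by omega), z1 m (m + 2) (by omega)] at h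
    rw [h]; ring

/-- monic version -/
noncomputable def mc (l : ℕ → ℝ[X]) (n : ℕ) : ℂ[X] := C ((((l n).leadingCoeff : ℝ) : ℂ))⁻¹ * lc l n

theorem lc_rec_inf {μ : Measure ℝ} {l : ℕ → ℝ[X]} {a b : ℕ → ℝ} (hM : IsM01 μ l a b) (M : ℝ)
    (hM1 : 1 ≤ M) :
    ∃ R : ℝ, ∀ n, ∀ z : ℂ, R ≤ ‖z‖ →
      (lc l n).eval z ≠ 0 ∧ M * ‖(lc l n).eval z‖ ≤ ‖(lc l (n + 1)).eval z‖ := by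
  obtain ⟨A, hA⟩ := hM.tendsto_a.norm.bddAbove_range
  obtain ⟨B, hB⟩ := hM.tendsto_b.norm.bddAbove_range
  have hA : ∀ n, |a n| ≤ A := fun n => hA ⟨n, rfl⟩
  have hB : ∀ n, |b n| ≤ B := fun n => hB ⟨n, rfl⟩
  have hA0 : 0 ≤ A := (abs_nonneg _).trans (hA 0)
  have hane : ∀ n, 0 < |a (n + 1)| := by
    intro n
    rw [abs_pos]
    intro h
    have := tau_rec hM n
    rw [h, zero_mul] at this
    exact (hM.onp.leadingCoeff_pos n).ne' this
  refine ⟨A * M + A + B, fun n => ?_⟩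
  induction n with
  | zero =>
    intro z hz
    have h0 : lc l 0 = C ((((l 0).leadingCoeff : ℝ) : ℂ)) := by
      have := eq_C_of_natDegree_eq_zero (lc_natDegree hM.onp 0)
      rw [this, ← lc_lead, leadingCoeff, lc_natDegree hM.onp]
    have hn : (lc l 0).eval z ≠ 0 := by rw [h0, eval_C]; exact tau_ne hM.onp 0
    refine ⟨hn, ?_⟩
    have h := congrArg (fun p : ℝ[X] => (p.map (algebraMap ℝ ℂ)).eval z) hM.recurrence_zero
    have h : z * (lc l 0).eval z = a 1 * (lc l 1).eval z + b 0 * (lc l 0).eval z := by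
      simpa [lc, smul_eq_C_mul] using h
    have h1 : (z - b 0) * (lc l 0).eval z = a 1 * (lc l 1).eval z := by linear_combination h
    have h2 := congrArg norm h1
    rw [norm_mul, norm_mul, Complex.norm_real, Real.norm_eq_abs] at h2
    have h3 : A * M ≤ ‖z - (b 0 : ℂ)‖ := by
      have := norm_sub_norm_le z (b 0 : ℂ)
      rw [Complex.norm_real, Real.norm_eq_abs] at this
      linarith [hB 0]
    have h4 : |a 1| * (M * ‖(lc l 0).eval z‖) ≤ |a 1| * ‖(lc l 1).eval z‖ := by
      rw [← h2, ← mul_assoc]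
      refine mul_le_mul_of_nonneg_right (le_trans ?_ h3) (norm_nonneg _)
      exact mul_le_mul_of_nonneg_right (hA 1) (by linarith)
    exact le_of_mul_le_mul_left h4 (hane 0)
  | succ n ih =>
    intro z hz
    obtain ⟨i1, i2⟩ := ih z hz
    have hn1 := norm_pos_iff.2 i1
    have hp : 0 < ‖(lc l (n + 1)).eval z‖ := lt_of_lt_of_le (by positivity) i2
    refine ⟨norm_pos_iff.1 hp, ?_⟩
    have h := lc_rec hM n z
    have h1 : (z - b (n + 1)) * (lc l (n + 1)).eval z - a (n + 1) * (lc l n).eval z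
      = a (n + 2) * (lc l (n + 2)).eval z := by linear_combination h
    have h2 : |a (n + 2)| * ‖(lc l (n + 2)).eval z‖ ≥
        ‖z - (b (n + 1) : ℂ)‖ * ‖(lc l (n + 1)).eval z‖ - |a (n + 1)| * ‖(lc l n).eval z‖ := by
      have := norm_sub_norm_le ((z - b (n + 1)) * (lc l (n + 1)).eval z) (a (n + 1) * (lc l n).eval z)
      rw [h1] at this
      simpa using this
    have h3 : A * M + A ≤ ‖z - (b (n + 1) : ℂ)‖ := by
      have := norm_sub_norm_le z (b (n + 1) : ℂ)
      rw [Complex.norm_real, Real.norm_eq_abs] at this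
      linarith [hB (n + 1)]
    have h5 : ‖(lc l n).eval z‖ ≤ ‖(lc l (n + 1)).eval z‖ := by nlinarith
    have h6 : |a (n + 1)| * ‖(lc l n).eval z‖ ≤ A * ‖(lc l (n + 1)).eval z‖ :=
      mul_le_mul (hA _) h5 (norm_nonneg _) hA0
    have h7 : (A * M + A) * ‖(lc l (n + 1)).eval z‖ ≤ ‖z - (b (n + 1) : ℂ)‖ * ‖(lc l (n + 1)).eval z‖ :=
      mul_le_mul_of_nonneg_right h3 hp.le
    have h8 : |a (n + 2)| * (M * ‖(lc l (n + 1)).eval z‖) ≤ A * (M * ‖(lc l (n + 1)).eval z‖) :=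
      mul_le_mul_of_nonneg_right (hA _) (by positivity)
    have h4 : |a (n + 2)| * (M * ‖(lc l (n + 1)).eval z‖) ≤ |a (n + 2)| * ‖(lc l (n + 2)).eval z‖ := by
      nlinarith
    exact le_of_mul_le_mul_left h4 (hane (n + 1))

theorem good_base {μ : Measure ℝ} [IsFiniteMeasure μ] (hK : IsCompact (msupp μ))
    {l : ℕ → ℝ[X]} {a b : ℕ → ℝ} (hM : IsM01 μ l a b) : Good μ (fun _ => 1) (mc l) := by
  have hf := phiFacts hK hM
  obtain ⟨hG0, hG1⟩ := GG_lim hK hM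
  have htn := tau_ne hM.onp
  have hac : Tendsto (fun n => ((a (n + 1) : ℝ) : ℂ)) atTop (𝓝 (1 / 2)) := by
    have := (Complex.continuous_ofReal.tendsto _).comp
      (hM.tendsto_a.comp (tendsto_add_atTop_nat 1))
    simpa [Function.comp_def] using this
  have hmev : ∀ n z, (mc l n).eval z = (((l n).leadingCoeff : ℝ) : ℂ)⁻¹ * (lc l n).eval z := by
    intro n z; simp [mc]
  have hrc : ∀ n, (((l n).leadingCoeff : ℝ) : ℂ) = a (n + 1) * (((l (n + 1)).leadingCoeff : ℝ) : ℂ) := by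
    intro n; rw [tau_rec hM n]; push_cast; ring
  have hane : ∀ n, (a (n + 1) : ℂ) ≠ 0 := fun n h => by
    have := hrc n
    rw [h, zero_mul] at this
    exact htn n this
  have hdeg : ∀ n, (lc l n).degree = n := fun n => by
    rw [degree_eq_natDegree (lc_ne hM.onp n), lc_natDegree hM.onp]
  have hLs : ∀ n m, n ≤ m → ∀ z ∈ (msuppC μ)ᶜ,
      (lc l n).eval z * ct μ (fun x : ℝ => (lc l m).eval (x : ℂ)) z = GG μ l n m z := by
    intro n m hnm z hz
    rw [ct_poly hK (poly_cont (lc l m) _) hz, lc_orth hK hM.onp m n hnm, add_zero]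
    · rfl
    · apply deg_divX
      rw [hdeg]; exact_mod_cast Nat.lt_succ_self n
  refine ⟨continuousOn_const, ?_, ?_, ?_, ?_, ?_, ?_⟩
  · refine Eventually.of_forall fun n => ⟨?_, ?_⟩
    · rw [mc, Monic, leadingCoeff_mul, leadingCoeff_C, lc_lead, inv_mul_cancel₀ (htn n)]
    · rw [mc, natDegree_C_mul (inv_ne_zero (htn n)), lc_natDegree hM.onp]
  · refine Eventually.of_forall fun n p hp => ?_
    have := lc_orth hK hM.onp n n le_rfl p hp
    have e : ∀ x : ℝ, p.eval (x : ℂ) * (mc l n).eval (x : ℂ) * 1 =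
      (((l n).leadingCoeff : ℝ) : ℂ)⁻¹ * (p.eval (x : ℂ) * (lc l n).eval (x : ℂ)) := by
      intro x; rw [hmev]; ring
    simp_rw [e]
    rw [integral_const_mul, this, mul_zero]
  · refine Eventually.of_forall fun n q hq h => ?_
    by_contra hq0
    set m := q.natDegree with hm
    have hmn : m < n := by
      rw [degree_eq_natDegree hq0] at hq; exact_mod_cast hq
    have h1 := h (lc l m) (by rw [hdeg]; exact_mod_cast hmn)
    set k : ℂ := q.leadingCoeff / (l m).leadingCoeff with hk
    have hd : (q - C k * lc l m).degree < m := by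
      have hk0 : k ≠ 0 := div_ne_zero (leadingCoeff_ne_zero.2 hq0) (htn m)
      have := degree_sub_lt_left (p := q) (q := C k * lc l m) (by
        rw [degree_C_mul hk0, hdeg, degree_eq_natDegree hq0]) hq0 (by
        rw [leadingCoeff_mul, leadingCoeff_C, lc_lead, hk, div_mul_cancel₀ _ (htn m)])
      rwa [degree_eq_natDegree hq0] at this
    have h2 := lc_orth hK hM.onp m m le_rfl _ hd
    have h3 := lc_on hM.onp m m
    rw [if_pos rfl] at h3
    have e : ∀ x : ℝ, (lc l m).eval (x : ℂ) * q.eval (x : ℂ) * 1 =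
        (q - C k * lc l m).eval (x : ℂ) * (lc l m).eval (x : ℂ) +
        k * ((lc l m).eval (x : ℂ) * (lc l m).eval (x : ℂ)) := by
      intro x; simp; ring
    simp_rw [e] at h1
    rw [integral_add, integral_const_mul, h2, h3] at h1
    · simp [hk, hq0, htn m] at h1
    · exact integ hK ((poly_cont _ _).mul (poly_cont _ _))
    · exact (integ hK ((poly_cont _ _).mul (poly_cont _ _))).const_mul _
  · have h1 := (CC.seq (Ω := (msuppC μ)ᶜ) hac).mul (hG0.succ.div hG1 (fun z hz =>
      one_div_ne_zero (mul_ne_zero (hf.phi_ne hz) (hf.sne z hz))))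
    refine (h1.congr ?_).congr_lim ?_
    · intro z hz
      have e1 := hG1.ev_ne hz (one_div_ne_zero (mul_ne_zero (hf.phi_ne hz) (hf.sne z hz)))
      have e2 : ∀ᶠ p : ℕ × ℂ in atTop ×ˢ 𝓝 z, p.2 ∈ (msuppC μ)ᶜ :=
        tendsto_snd.eventually ((isOpen_Om hK).mem_nhds hz)
      filter_upwards [e1, e2] with p h1 h2
      rw [← hLs _ _ (Nat.le_succ _) _ h2] at h1
      rw [← hLs _ _ (Nat.le_succ _) _ h2, ← hLs _ _ le_rfl _ h2, hmev, hmev, hrc p.1]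
      have := htn (p.1 + 1)
      have := hane p.1
      have h3 := left_ne_zero_of_mul h1
      have h4 := right_ne_zero_of_mul h1
      field_simp
    · intro z hz
      have := hf.phi_ne hz
      have := hf.sne z hz
      field_simp
  · have h1 := (CC.seq (Ω := (msuppC μ)ᶜ) hac).mul (hG1.div hG0 (fun z hz =>
      one_div_ne_zero (hf.sne z hz)))
    have hct : ∀ n z, ct μ (fun x : ℝ => (mc l n).eval (x : ℂ) * 1) z =
        (((l n).leadingCoeff : ℝ) : ℂ)⁻¹ * ct μ (fun x : ℝ => (lc l n).eval (x : ℂ)) z := by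
      intro n z
      unfold ct
      rw [← integral_const_mul]
      congr 1; ext x; simp only [hmev]; ring
    refine (h1.congr ?_).congr_lim ?_
    · intro z hz
      have e1 := hG0.ev_ne hz (one_div_ne_zero (hf.sne z hz))
      have e2 : ∀ᶠ p : ℕ × ℂ in atTop ×ˢ 𝓝 z, p.2 ∈ (msuppC μ)ᶜ :=
        tendsto_snd.eventually ((isOpen_Om hK).mem_nhds hz)
      filter_upwards [e1, e2] with p h1 h2
      rw [← hLs _ _ le_rfl _ h2] at h1
      rw [← hLs _ _ (Nat.le_succ _) _ h2, ← hLs _ _ le_rfl _ h2, hct, hct, hrc p.1]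
      have := htn (p.1 + 1)
      have := hane p.1
      have h3 := left_ne_zero_of_mul h1
      have h4 := right_ne_zero_of_mul h1
      field_simp
    · intro z hz
      have := hf.phi_ne hz
      have := hf.sne z hz
      field_simp
  · intro M
    obtain ⟨A, hA⟩ := hM.tendsto_a.norm.bddAbove_range
    have hA : ∀ n, |a n| ≤ A := fun n => hA ⟨n, rfl⟩
    -- M |P_n| ≤ |P_{n+1}| where P_{n+1}/P_n = a_{n+1} l_{n+1}/l_n; a_{n+1} ≥ 1/4 eventually
    obtain ⟨R, hR⟩ := lc_rec_inf hM (4 * |M| + 1) (by linarith [abs_nonneg M])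
    have hev : ∀ᶠ n in atTop, (1 / 4 : ℝ) < a (n + 1) :=
      (hM.tendsto_a.comp (tendsto_add_atTop_nat 1)).eventually (lt_mem_nhds (by norm_num))
    obtain ⟨N, hN⟩ := eventually_atTop.1 hev
    refine ⟨R, N, fun n hn z hz => ?_⟩
    obtain ⟨h1, h2⟩ := hR n z hz
    have hnz : (mc l n).eval z ≠ 0 := by
      rw [hmev]; exact mul_ne_zero (inv_ne_zero (htn n)) h1
    refine ⟨hnz, ?_⟩
    have ha := hN n hn
    have ht := hM.onp.leadingCoeff_pos (n + 1)
    rw [hmev, hmev, hrc n, norm_mul, norm_mul, norm_inv, norm_inv, norm_mul, Complex.norm_real,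
      Complex.norm_real, Real.norm_eq_abs, Real.norm_eq_abs, abs_of_pos ht,
      abs_of_pos (by linarith : 0 < a (n + 1)), mul_inv]
    have h3 : M * ((a (n + 1))⁻¹ * ‖(lc l n).eval z‖) ≤ ‖(lc l (n + 1)).eval z‖ := by
      have : M * (a (n + 1))⁻¹ ≤ 4 * |M| + 1 := by
        rw [← div_eq_mul_inv, div_le_iff₀ (by linarith)]
        nlinarith [abs_nonneg M, le_abs_self M]
      calc _ = (M * (a (n + 1))⁻¹) * ‖(lc l n).eval z‖ := by ring
        _ ≤ (4 * |M| + 1) * ‖(lc l n).eval z‖ := mul_le_mul_of_nonneg_right this (norm_nonneg _)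
        _ ≤ _ := h2
    calc _ = ((l (n + 1)).leadingCoeff)⁻¹ * (M * ((a (n + 1))⁻¹ * ‖(lc l n).eval z‖)) := by ring
      _ ≤ _ := mul_le_mul_of_nonneg_left h3 (inv_nonneg.2 ht.le)

theorem ev_of_succ {p : ℕ → Prop} (h : ∀ᶠ n in atTop, p (n + 1)) : ∀ᶠ n in atTop, p n := by
  obtain ⟨N, hN⟩ := eventually_atTop.1 h
  refine eventually_atTop.2 ⟨N + 1, fun n hn => ?_⟩
  have := hN (n - 1) (by omega)
  rwa [Nat.sub_add_cancel (by omega)] at this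

theorem ev_succ {p : ℕ → Prop} (h : ∀ᶠ n in atTop, p n) : ∀ᶠ n in atTop, p (n + 1) :=
  (tendsto_add_atTop_nat 1).eventually h

theorem CC.transfer {Ω : Set ℂ} {A B : ℕ → ℂ → ℂ} {F g : ℂ → ℂ}
    (h1 : CC Ω (fun n z => A n z / B n z) F) (hF : ∀ z ∈ Ω, F z ≠ 0)
    (h2 : CC Ω (fun n z => B (n + 1) z / B n z) g) (hg : ∀ z ∈ Ω, g z ≠ 0) :
    CC Ω (fun n z => A (n + 1) z / A n z) g := by
  have h3 := (h1.succ.mul h2).div h1 hF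
  refine (h3.congr ?_).congr_lim ?_
  · intro z hz
    filter_upwards [h2.ev_ne hz (hg z hz)] with p hp
    have hp := div_ne_zero_iff.1 hp
    have e1 := hp.1
    have e2 := hp.2
    rw [div_mul_div_cancel₀ e1, div_div_div_cancel_right₀ e2]
  · intro z hz
    rw [mul_div_cancel_left₀ _ (hF z hz)]

theorem inf_comb {P : ℕ → ℂ → ℂ} {κ : ℕ → ℂ} {w : ℂ} (hκ : Tendsto κ atTop (𝓝 w))
    (h : ∀ M : ℝ, ∃ R : ℝ, ∃ N : ℕ, ∀ n ≥ N, ∀ z : ℂ, R ≤ ‖z‖ →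
      P n z ≠ 0 ∧ M * ‖P n z‖ ≤ ‖P (n + 1) z‖) :
    ∀ M : ℝ, ∃ R : ℝ, ∃ N : ℕ, ∀ n ≥ N, ∀ z : ℂ, R ≤ ‖z‖ →
      P (n + 1) z - κ n * P n z ≠ 0 ∧ M * ‖P (n + 1) z - κ n * P n z‖ ≤
        ‖P (n + 2) z - κ (n + 1) * P (n + 1) z‖ := by
  intro M
  obtain ⟨k, hk⟩ := hκ.norm.bddAbove_range
  have hk : ∀ n, ‖κ n‖ ≤ k := fun n => hk ⟨n, rfl⟩
  have hk0 : 0 ≤ k := (norm_nonneg _).trans (hk 0)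
  obtain ⟨R, N, hR⟩ := h (2 * |M| + k + 1)
  refine ⟨R, N, fun n hn z hz => ?_⟩
  obtain ⟨a1, a2⟩ := hR n hn z hz
  obtain ⟨b1, b2⟩ := hR (n + 1) (by omega) z hz
  have hM := abs_nonneg M
  have p0 := norm_pos_iff.2 a1
  have p1 := norm_pos_iff.2 b1
  have l1 : ‖P (n + 1) z‖ - k * ‖P n z‖ ≤ ‖P (n + 1) z - κ n * P n z‖ := by
    have := norm_sub_norm_le (P (n + 1) z) (κ n * P n z)
    rw [norm_mul] at this
    have := mul_le_mul_of_nonneg_right (hk n) p0.le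
    linarith
  have l2 : ‖P (n + 2) z‖ - k * ‖P (n + 1) z‖ ≤ ‖P (n + 2) z - κ (n + 1) * P (n + 1) z‖ := by
    have := norm_sub_norm_le (P (n + 2) z) (κ (n + 1) * P (n + 1) z)
    rw [norm_mul] at this
    have := mul_le_mul_of_nonneg_right (hk (n + 1)) p1.le
    linarith
  have l3 : ‖P (n + 1) z - κ n * P n z‖ ≤ ‖P (n + 1) z‖ + k * ‖P n z‖ := by
    have := norm_sub_le (P (n + 1) z) (κ n * P n z)
    rw [norm_mul] at this
    have := mul_le_mul_of_nonneg_right (hk n) p0.le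
    linarith
  have b2 : (2 * |M| + k + 1) * ‖P (n + 1) z‖ ≤ ‖P (n + 2) z‖ := b2
  constructor
  · rw [← norm_pos_iff]
    nlinarith [mul_nonneg hM p0.le]
  · have l4 : k * ‖P n z‖ ≤ ‖P (n + 1) z‖ := by nlinarith [mul_nonneg hM p0.le]
    have l5 : M * ‖P (n + 1) z - κ n * P n z‖ ≤ |M| * (2 * ‖P (n + 1) z‖) :=
      mul_le_mul (le_abs_self M) (by linarith) (norm_nonneg _) hM
    nlinarith

theorem dslope_ne {Ω : Set ℂ} {g : ℂ → ℂ} {c g' : ℂ} (hinj : ∀ z ∈ Ω, g z = g c → z = c)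
    (hd : HasDerivAt g g' c) (hg' : g' ≠ 0) : ∀ z ∈ Ω, dslope g c z ≠ 0 := by
  intro z hz
  by_cases h : z = c
  · subst h
    rw [dslope_same, hd.deriv]
    exact hg'
  · rw [dslope_of_ne _ h, slope_def_field]
    exact div_ne_zero (sub_ne_zero.2 fun h' => h (hinj z hz h')) (sub_ne_zero.2 h)

/-- if `Q` satisfies orthogonality and has degree at most `n`, it is a multiple of `P n` -/
theorem mult_of_uniq {μ : Measure ℝ} [IsFiniteMeasure μ] (hK : IsCompact (msupp μ)) {r : ℝ → ℂ}
    (hr : ContinuousOn r (msupp μ)) {n : ℕ} {P : ℂ[X]} (hm : P.Monic) (hd : P.natDegree = n)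
    (ho : ∀ p : ℂ[X], p.degree < n →
      ∫ x : ℝ, p.eval (x : ℂ) * P.eval (x : ℂ) * r x ∂μ = 0)
    (hu : ∀ q : ℂ[X], q.degree < n → (∀ p : ℂ[X], p.degree < n →
      ∫ x : ℝ, p.eval (x : ℂ) * q.eval (x : ℂ) * r x ∂μ = 0) → q = 0)
    (q : ℂ[X]) (hq : q.degree < (n + 1 : ℕ)) (hqo : ∀ p : ℂ[X], p.degree < n →
      ∫ x : ℝ, p.eval (x : ℂ) * q.eval (x : ℂ) * r x ∂μ = 0) : q = C (q.coeff n) * P := by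
  rw [← sub_eq_zero]
  apply hu
  · rw [degree_lt_iff_coeff_zero]
    intro j hj
    rw [coeff_sub, coeff_C_mul]
    rcases hj.eq_or_lt with rfl | hj
    · have : P.coeff n = 1 := by rw [← hd]; exact hm
      rw [this]; ring
    · rw [coeff_eq_zero_of_natDegree_lt (p := P) (by omega),
          (degree_lt_iff_coeff_zero _ _).1 hq j (by omega)]
      simp
  · intro p hp
    have e : ∀ x : ℝ, p.eval (x : ℂ) * (q - C (q.coeff n) * P).eval (x : ℂ) * r x =
        p.eval (x : ℂ) * q.eval (x : ℂ) * r x -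
        q.coeff n * (p.eval (x : ℂ) * P.eval (x : ℂ) * r x) := by
      intro x; simp; ring
    simp_rw [e]
    rw [integral_sub, integral_const_mul, hqo p hp, ho p hp]
    · simp
    · exact integ hK (((poly_cont _ _).mul (poly_cont _ _)).mul hr)
    · exact (integ hK (((poly_cont _ _).mul (poly_cont _ _)).mul hr)).const_mul _

theorem orth_comb {μ : Measure ℝ} [IsFiniteMeasure μ] (hK : IsCompact (msupp μ)) {r : ℝ → ℂ}
    (hr : ContinuousOn r (msupp μ)) {p P Q : ℂ[X]} (k : ℂ)
    (h1 : ∫ x : ℝ, p.eval (x : ℂ) * P.eval (x : ℂ) * r x ∂μ = 0)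
    (h2 : ∫ x : ℝ, p.eval (x : ℂ) * Q.eval (x : ℂ) * r x ∂μ = 0) :
    ∫ x : ℝ, p.eval (x : ℂ) * (P.eval (x : ℂ) - k * Q.eval (x : ℂ)) * r x ∂μ = 0 := by
  have e : ∀ x : ℝ, p.eval (x : ℂ) * (P.eval (x : ℂ) - k * Q.eval (x : ℂ)) * r x =
      p.eval (x : ℂ) * P.eval (x : ℂ) * r x - k * (p.eval (x : ℂ) * Q.eval (x : ℂ) * r x) := by
    intro x; ring
  simp_rw [e]
  rw [integral_sub, integral_const_mul, h1, h2]
  · simp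
  · exact integ hK (((poly_cont _ _).mul (poly_cont _ _)).mul hr)
  · exact (integ hK (((poly_cont _ _).mul (poly_cont _ _)).mul hr)).const_mul _

theorem comb_monic {P Q : ℂ[X]} {n : ℕ} (hP : P.Monic) (hPd : P.natDegree = n + 1)
    (hQ : Q.natDegree = n) (k : ℂ) : (P - C k * Q).Monic ∧ (P - C k * Q).natDegree = n + 1 := by
  have h : (C k * Q).degree < P.degree := by
    rw [degree_eq_natDegree hP.ne_zero, hPd]
    refine lt_of_le_of_lt degree_le_natDegree ?_
    have := natDegree_C_mul_le k Q
    exact_mod_cast (by omega : (C k * Q).natDegree < n + 1)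
  refine ⟨hP.sub_of_left h, ?_⟩
  rw [natDegree_sub_eq_left_of_natDegree_lt, hPd]
  have := natDegree_C_mul_le k Q
  omega

theorem good_mul {μ : Measure ℝ} [IsFiniteMeasure μ] (hK : IsCompact (msupp μ))
    (hf : PhiFacts (msuppC μ)ᶜ) {r : ℝ → ℂ} {P : ℕ → ℂ[X]} (hG : Good μ r P) {c : ℂ}
    (hc : c ∈ (msuppC μ)ᶜ) : ∃ P' : ℕ → ℂ[X], Good μ (fun x => ((x : ℂ) - c) * r x) P' := by
  have hΩ := isOpen_Om hK
  have hOm : ∀ z ∈ (msuppC μ)ᶜ, ∀ᶠ p : ℕ × ℂ in atTop ×ˢ 𝓝 z, p.2 ∈ (msuppC μ)ᶜ :=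
    fun z hz => tendsto_snd.eventually (hΩ.mem_nhds hz)
  have hne : ∀ z ∈ (msuppC μ)ᶜ, ∀ᶠ p : ℕ × ℂ in atTop ×ˢ 𝓝 z, (P p.1).eval p.2 ≠ 0 := by
    intro z hz
    filter_upwards [hG.ratio.ev_ne hz (div_ne_zero (hf.phi_ne hz) two_ne_zero)] with p hp
    exact (div_ne_zero_iff.1 hp).2
  have hqne : ∀ z ∈ (msuppC μ)ᶜ, ∀ᶠ p : ℕ × ℂ in atTop ×ˢ 𝓝 z,
      ct μ (fun x : ℝ => (P p.1).eval (x : ℂ) * r x) p.2 ≠ 0 := by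
    intro z hz
    filter_upwards [hG.qratio.ev_ne hz (one_div_ne_zero (mul_ne_zero two_ne_zero (hf.phi_ne hz)))]
      with p hp
    exact (div_ne_zero_iff.1 hp).2
  set κ : ℕ → ℂ := fun n => (P (n + 1)).eval c / (P n).eval c with hκ
  have hκlim : Tendsto κ atTop (𝓝 (phi c / 2)) := hG.ratio.pt hc
  have hPc : ∀ᶠ n in atTop, (P n).eval c ≠ 0 := ev_pt (hne c hc)
  let P' : ℕ → ℂ[X] := fun n => (P (n + 1) - C (κ n) * P n) /ₘ (X - C c)
  have hP' : ∀ᶠ n in atTop, (X - C c) * P' n = P (n + 1) - C (κ n) * P n := by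
    filter_upwards [hPc] with n hn
    rw [mul_divByMonic_eq_iff_isRoot, IsRoot]
    simp [hκ, hn]
  have hPe : ∀ᶠ n in atTop, ∀ z, (z - c) * (P' n).eval z =
      (P (n + 1)).eval z - κ n * (P n).eval z := by
    filter_upwards [hP'] with n hn z
    have := congrArg (eval z) hn
    simpa using this
  have hPep : ∀ z ∈ (msuppC μ)ᶜ, ∀ᶠ p : ℕ × ℂ in atTop ×ˢ 𝓝 z, ∀ z, (z - c) * (P' p.1).eval z =
      (P (p.1 + 1)).eval z - κ p.1 * (P p.1).eval z := fun z _ => tendsto_fst.eventually hPe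
  have hr := hG.cont
  have hr' : ContinuousOn (fun x : ℝ => ((x : ℂ) - c) * r x) (msupp μ) :=
    ContinuousOn.mul (by fun_prop) hr
  refine ⟨P', hr', ?_, ?_, ?_, ?_, ?_, ?_⟩
  · filter_upwards [hP', hG.monic, ev_succ hG.monic] with n hn h1 h2
    obtain ⟨m1, m2⟩ := comb_monic h2.1 h2.2 h1.2 (κ n)
    rw [← hn] at m1 m2
    have h3 : (P' n).Monic := (monic_X_sub_C c).of_mul_monic_left m1
    refine ⟨h3, ?_⟩
    rw [(monic_X_sub_C c).natDegree_mul h3, natDegree_X_sub_C] at m2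
    omega
  · filter_upwards [hPe, hG.orth, ev_succ hG.orth] with n hn h1 h2 p hp
    have := orth_comb hK hr (κ n) (h2 p (hp.trans (by exact_mod_cast Nat.lt_succ_self n))) (h1 p hp)
    rw [← this]
    congr 1; ext x
    rw [← hn]; ring
  · filter_upwards [hPc, hG.monic, hG.orth, hG.uniq] with n hn h1 h2 h3 q hq hqo
    have e := mult_of_uniq hK hr h1.1 h1.2 h2 h3 ((X - C c) * q) (by
      by_cases hq0 : q = 0
      · simp [hq0]
      rw [degree_mul, degree_X_sub_C, degree_eq_natDegree hq0]
      rw [degree_eq_natDegree hq0] at hq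
      norm_cast at hq ⊢
      omega) (by
      intro p hp
      rw [← hqo p hp]
      congr 1; ext x; simp; ring)
    have e1 := congrArg (eval c) e
    simp [hn] at e1
    have e2 : (X - C c) * q = 0 := by rw [e]; simp [e1]
    rcases mul_eq_zero.1 e2 with h | h
    · exact absurd h (X_sub_C_ne_zero c)
    · exact h
  · have hH : CC (msuppC μ)ᶜ (fun n z => (P' n).eval z / (P n).eval z)
        (dslope (fun z => phi z / 2) c) := by
      refine CC.dslope hΩ hc hG.ratio
        (fun z hz => ((hf.phi_diff hz).div_const 2).differentiableWithinAt) ?_ ?_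
      · intro z hz
        filter_upwards [hPep z hz, hne z hz] with p h1 h2
        have := h1 p.2
        rw [div_mul_eq_mul_div, mul_comm, this, sub_div, mul_div_cancel_right₀ _ h2]
      · filter_upwards [hne c hc] with p hp
        exact (P' p.1).differentiable.differentiableAt.div (P p.1).differentiable.differentiableAt hp
    refine CC.transfer (A := fun n z => (P' n).eval z) hH ?_ hG.ratio
      (fun z hz => div_ne_zero (hf.phi_ne hz) two_ne_zero)
    refine dslope_ne ?_ ((hf.deriv_phi hΩ hc).div_const 2)
      (div_ne_zero (div_ne_zero (hf.phi_ne hc) (hf.sne c hc)) two_ne_zero)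
    intro z hz h
    refine hf.inj hz hc ?_
    linear_combination 2 * h
  · have hct : ∀ z ∈ (msuppC μ)ᶜ, ∀ᶠ p : ℕ × ℂ in atTop ×ˢ 𝓝 z,
        ct μ (fun x : ℝ => (P' p.1).eval (x : ℂ) * (((x : ℂ) - c) * r x)) p.2 =
        ct μ (fun x : ℝ => (P (p.1 + 1)).eval (x : ℂ) * r x) p.2 -
        κ p.1 * ct μ (fun x : ℝ => (P p.1).eval (x : ℂ) * r x) p.2 := by
      intro z hz
      filter_upwards [hPep z hz, hOm z hz] with p h1 h2
      have hPr : ∀ n, ContinuousOn (fun x : ℝ => (P n).eval (x : ℂ) * r x) (msupp μ) :=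
        fun n => (poly_cont _ _).mul hr
      rw [← ct_sub_mul hK (hPr _) (hPr _) h2]
      congr 1; ext x
      linear_combination (r x) * h1 x
    have hH : CC (msuppC μ)ᶜ (fun n z =>
        ct μ (fun x : ℝ => (P' n).eval (x : ℂ) * (((x : ℂ) - c) * r x)) z /
        ct μ (fun x : ℝ => (P n).eval (x : ℂ) * r x) z)
        (fun z => 1 / (2 * phi z) - phi c / 2) := by
      refine (hG.qratio.sub (CC.seq hκlim)).congr ?_
      intro z hz
      filter_upwards [hct z hz, hqne z hz] with p h1 h2
      rw [h1, sub_div, mul_div_cancel_right₀ _ h2]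
    refine CC.transfer (A := fun n z =>
      ct μ (fun x : ℝ => (P' n).eval (x : ℂ) * (((x : ℂ) - c) * r x)) z) hH ?_ hG.qratio
      (fun z hz => one_div_ne_zero (mul_ne_zero two_ne_zero (hf.phi_ne hz)))
    intro z hz h
    have h0 := hf.phi_ne hz
    have h1 : phi c * phi z = 1 := by
      rw [sub_eq_zero] at h
      field_simp at h
      linear_combination -h
    have h2 := congrArg norm h1
    rw [norm_mul, norm_one] at h2
    nlinarith [hf.lt z hz, hf.lt c hc]
  · intro M
    obtain ⟨R, N, hR⟩ := inf_comb (P := fun n z => (P n).eval z) hκlim hG.inf M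
    obtain ⟨N', hN'⟩ := eventually_atTop.1 hPe
    refine ⟨max R (‖c‖ + 1), max N N', fun n hn z hz => ?_⟩
    have hzR : R ≤ ‖z‖ := (le_max_left _ _).trans hz
    have hzc : ‖c‖ + 1 ≤ ‖z‖ := (le_max_right _ _).trans hz
    have hz0 : z - c ≠ 0 := by
      intro h
      rw [sub_eq_zero.1 h] at hzc; linarith
    obtain ⟨h1, h2⟩ := hR n ((le_max_left _ _).trans hn) z hzR
    rw [← hN' n ((le_max_right _ _).trans hn) z] at h1 h2
    rw [← hN' (n + 1) (((le_max_right _ _).trans hn).trans (Nat.le_succ _)) z] at h2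
    refine ⟨right_ne_zero_of_mul h1, ?_⟩
    rw [norm_mul, norm_mul] at h2
    refine le_of_mul_le_mul_left (a := ‖z - c‖) ?_ (norm_pos_iff.2 hz0)
    linarith

theorem good_div {μ : Measure ℝ} [IsFiniteMeasure μ] (hK : IsCompact (msupp μ))
    (hf : PhiFacts (msuppC μ)ᶜ) {r : ℝ → ℂ} {P : ℕ → ℂ[X]} (hG : Good μ r P) {d : ℂ}
    (hd : d ∈ (msuppC μ)ᶜ) : ∃ P' : ℕ → ℂ[X], Good μ (fun x => r x / ((x : ℂ) - d)) P' := by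
  have hΩ := isOpen_Om hK
  have hOm : ∀ z ∈ (msuppC μ)ᶜ, ∀ᶠ p : ℕ × ℂ in atTop ×ˢ 𝓝 z, p.2 ∈ (msuppC μ)ᶜ :=
    fun z hz => tendsto_snd.eventually (hΩ.mem_nhds hz)
  have hne : ∀ z ∈ (msuppC μ)ᶜ, ∀ᶠ p : ℕ × ℂ in atTop ×ˢ 𝓝 z, (P p.1).eval p.2 ≠ 0 := by
    intro z hz
    filter_upwards [hG.ratio.ev_ne hz (div_ne_zero (hf.phi_ne hz) two_ne_zero)] with p hp
    exact (div_ne_zero_iff.1 hp).2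
  have hqne : ∀ z ∈ (msuppC μ)ᶜ, ∀ᶠ p : ℕ × ℂ in atTop ×ˢ 𝓝 z,
      ct μ (fun x : ℝ => (P p.1).eval (x : ℂ) * r x) p.2 ≠ 0 := by
    intro z hz
    filter_upwards [hG.qratio.ev_ne hz (one_div_ne_zero (mul_ne_zero two_ne_zero (hf.phi_ne hz)))]
      with p hp
    exact (div_ne_zero_iff.1 hp).2
  set q : ℕ → ℂ → ℂ := fun n => ct μ (fun x : ℝ => (P n).eval (x : ℂ) * r x) with hq
  set κ : ℕ → ℂ := fun n => q (n + 1) d / q n d with hκ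
  have hκlim : Tendsto κ atTop (𝓝 (1 / (2 * phi d))) := hG.qratio.pt hd
  have hqd : ∀ᶠ n in atTop, q n d ≠ 0 := ev_pt (hqne d hd)
  let D : ℕ → ℂ[X] := fun n => P (n + 1) - C (κ n) * P n
  have hDe : ∀ n z, (D n).eval z = (P (n + 1)).eval z - κ n * (P n).eval z := by
    intro n z; simp [D]
  have hr := hG.cont
  have hxd : ∀ x ∈ msupp μ, (x : ℂ) - d ≠ 0 := fun x hx h =>
    sub_ne_of hd hx (by rw [← neg_sub, h, neg_zero])
  have hr' : ContinuousOn (fun x : ℝ => r x / ((x : ℂ) - d)) (msupp μ) :=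
    hr.div (by fun_prop) hxd
  have hDr : ∀ n, ContinuousOn (fun x : ℝ => (D n).eval (x : ℂ) * r x) (msupp μ) :=
    fun n => (poly_cont _ _).mul hr
  have hctD : ∀ n, ∀ z ∈ (msuppC μ)ᶜ, ct μ (fun x : ℝ => (D n).eval (x : ℂ) * r x) z =
      q (n + 1) z - κ n * q n z := by
    intro n z hz
    have hPr : ∀ n, ContinuousOn (fun x : ℝ => (P n).eval (x : ℂ) * r x) (msupp μ) :=
      fun n => (poly_cont _ _).mul hr
    show _ = ct μ (fun x : ℝ => (P (n + 1)).eval (x : ℂ) * r x) z -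
      κ n * ct μ (fun x : ℝ => (P n).eval (x : ℂ) * r x) z
    rw [← ct_sub_mul hK (hPr _) (hPr _) hz]
    congr 1; ext x
    rw [hDe]
    ring
  have hctd : ∀ᶠ n in atTop, ct μ (fun x : ℝ => (D n).eval (x : ℂ) * r x) d = 0 := by
    filter_upwards [hqd] with n hn
    rw [hctD n d hd, hκ]
    simp [hn]
  -- integrals against r/(x-d) are minus Cauchy transforms
  have hintg : ∀ g : ℝ → ℂ, ∫ x : ℝ, g x / ((x : ℂ) - d) ∂μ = - ct μ g d := by
    intro g
    rw [ct, ← integral_neg]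
    congr 1; ext x
    rw [← neg_sub d (x : ℂ), div_neg]
  have hctS : ∀ᶠ n in atTop, ∀ z ∈ (msuppC μ)ᶜ,
      ct μ (fun x : ℝ => (D n).eval (x : ℂ) * (r x / ((x : ℂ) - d))) z * (z - d) =
      q (n + 1) z - κ n * q n z := by
    filter_upwards [hctd] with n hn z hz
    rw [← hctD n z hz]
    have h1 : ∫ x : ℝ, ((D n).eval (x : ℂ) * r x) / ((x : ℂ) - d) ∂μ = 0 := by
      rw [hintg, hn, neg_zero]
    have h2 : ct μ (fun x : ℝ => (D n).eval (x : ℂ) * r x) z =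
        ct μ (fun x : ℝ => (D n).eval (x : ℂ) * r x) z +
        ∫ x : ℝ, ((D n).eval (x : ℂ) * r x) / ((x : ℂ) - d) ∂μ := by rw [h1, add_zero]
    rw [h2]
    have i1 : Integrable (fun x : ℝ => ((D n).eval (x : ℂ) * r x) / (z - (x : ℂ))) μ :=
      integ hK (ct_cont (hDr n) hz)
    have i2 : Integrable (fun x : ℝ => ((D n).eval (x : ℂ) * r x) / ((x : ℂ) - d)) μ :=
      integ hK ((hDr n).div (by fun_prop) hxd)
    unfold ct
    rw [← integral_mul_const, ← integral_add i1 i2]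
    apply integral_congr_ae
    filter_upwards [ae_msupp μ] with x hx
    have e1 := sub_ne_of hz hx
    have e2 := hxd x hx
    field_simp
    ring
  refine ⟨fun n => D (n - 1), hr', ?_, ?_, ?_, ?_, ?_, ?_⟩
  · apply ev_of_succ
    filter_upwards [hG.monic, ev_succ hG.monic] with n h1 h2
    exact comb_monic h2.1 h2.2 h1.2 (κ n)
  · apply ev_of_succ
    filter_upwards [hctd, hG.orth, ev_succ hG.orth] with n hn h1 h2 p hp
    simp only [Nat.add_sub_cancel]
    have e := ct_poly hK (hDr n) hd p
    have e2 : ∫ x : ℝ, (p /ₘ (X - C d)).eval (x : ℂ) * ((D n).eval (x : ℂ) * r x) ∂μ = 0 := by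
      have hpd := deg_divX p d n hp
      have := orth_comb hK hr (κ n) (h2 _ (hpd.trans (by exact_mod_cast Nat.lt_succ_self n)))
        (h1 _ hpd)
      rw [← this]
      congr 1; ext x
      rw [hDe]; ring
    rw [hn, e2, mul_zero, add_zero] at e
    have e3 := hintg (fun x : ℝ => p.eval (x : ℂ) * ((D n).eval (x : ℂ) * r x))
    rw [← e, neg_zero] at e3
    rw [← e3]
    congr 1; ext x; ring
  · apply ev_of_succ
    filter_upwards [hqd, hG.monic, hG.orth, hG.uniq] with n hn h1 h2 h3 t ht hto
    have e := mult_of_uniq hK hr h1.1 h1.2 h2 h3 t ht (by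
      intro p hp
      have := hto ((X - C d) * p) (by
        by_cases hq0 : p = 0
        · simp [hq0]
        rw [degree_mul, degree_X_sub_C, degree_eq_natDegree hq0]
        rw [degree_eq_natDegree hq0] at hp
        norm_cast at hp ⊢
        omega)
      rw [← this]
      apply integral_congr_ae
      filter_upwards [ae_msupp μ] with x hx
      have e2 := hxd x hx
      simp
      field_simp)
    have e1 := hto 1 (by rw [degree_one]; exact_mod_cast Nat.succ_pos n)
    have e2 := hintg (fun x : ℝ => t.eval (x : ℂ) * r x)
    have e3 : ∫ x : ℝ, t.eval (x : ℂ) * r x / ((x : ℂ) - d) ∂μ = 0 := by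
      rw [← e1]; congr 1; ext x; simp; ring
    rw [e3] at e2
    have e4 : ct μ (fun x : ℝ => t.eval (x : ℂ) * r x) d = t.coeff n * q n d := by
      rw [hq]
      unfold ct
      rw [← integral_const_mul]
      congr 1; ext x
      have := congrArg (eval (x : ℂ)) e
      rw [eval_mul, eval_C] at this
      simp only [this]; ring
    rw [e4] at e2
    have e5 : t.coeff n = 0 := by simpa [hn] using e2
    rw [e, e5]; simp
  · apply CC.of_succ
    have hH : CC (msuppC μ)ᶜ (fun n z => (D n).eval z / (P n).eval z)
        (fun z => phi z / 2 - 1 / (2 * phi d)) := by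
      refine (hG.ratio.sub (CC.seq hκlim)).congr ?_
      intro z hz
      filter_upwards [hne z hz] with p h2
      rw [hDe, sub_div, mul_div_cancel_right₀ _ h2]
    refine CC.transfer (A := fun n z => (D n).eval z) hH ?_ hG.ratio
      (fun z hz => div_ne_zero (hf.phi_ne hz) two_ne_zero)
    intro z hz h
    have h0 := hf.phi_ne hd
    have h1 : phi d * phi z = 1 := by
      rw [sub_eq_zero] at h
      field_simp at h
      linear_combination h
    have h2 := congrArg norm h1
    rw [norm_mul, norm_one] at h2
    nlinarith [hf.lt z hz, hf.lt d hd]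
  · apply CC.of_succ
    have hH : CC (msuppC μ)ᶜ (fun n z =>
        ct μ (fun x : ℝ => (D n).eval (x : ℂ) * (r x / ((x : ℂ) - d))) z / q n z)
        (dslope (fun z => 1 / (2 * phi z)) d) := by
      refine CC.dslope hΩ hd hG.qratio
        (fun z hz => DifferentiableAt.differentiableWithinAt ?_) ?_ ?_
      · exact (differentiableAt_const _).div ((hf.phi_diff hz).const_mul 2)
          (mul_ne_zero two_ne_zero (hf.phi_ne hz))
      · intro z hz
        filter_upwards [(tendsto_fst (f := atTop) (g := 𝓝 z)).eventually hctS, hqne z hz, hOm z hz]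
          with p h1 h2 h3
        have := h1 p.2 h3
        rw [div_mul_eq_mul_div, this, sub_div, mul_div_cancel_right₀ _ h2]
      · filter_upwards [hqne d hd, hOm d hd] with p hp hp2
        exact (ct_diff hK ((poly_cont _ _).mul hr') hp2).div
          (ct_diff hK ((poly_cont _ _).mul hr) hp2) hp
    refine CC.transfer (A := fun n z =>
      ct μ (fun x : ℝ => (D n).eval (x : ℂ) * (r x / ((x : ℂ) - d))) z) hH ?_ hG.qratio
      (fun z hz => one_div_ne_zero (mul_ne_zero two_ne_zero (hf.phi_ne hz)))
    have h0 := hf.phi_ne hd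
    have h1 := hf.sne d hd
    have hder : HasDerivAt (fun z => 1 / (2 * phi z))
        ((0 * (2 * phi d) - 1 * (2 * (phi d / sqrtB d))) / (2 * phi d) ^ 2) d :=
      (hasDerivAt_const d (1 : ℂ)).div ((hf.deriv_phi hΩ hd).const_mul 2)
        (mul_ne_zero two_ne_zero h0)
    refine dslope_ne ?_ hder ?_
    · intro z hz h
      refine hf.inj hz hd ?_
      have h2 := hf.phi_ne hz
      field_simp at h
      exact h.symm
    · rw [zero_mul, zero_sub, one_mul]
      refine div_ne_zero (neg_ne_zero.2 ?_) ?_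
      · exact mul_ne_zero two_ne_zero (div_ne_zero h0 h1)
      · exact pow_ne_zero 2 (mul_ne_zero two_ne_zero h0)
  · intro M
    obtain ⟨R, N, hR⟩ := inf_comb (P := fun n z => (P n).eval z) hκlim hG.inf M
    refine ⟨R, N + 1, fun n hn z hz => ?_⟩
    obtain ⟨m, rfl⟩ : ∃ m, n = m + 1 := ⟨n - 1, by omega⟩
    obtain ⟨h1, h2⟩ := hR m (by omega) z hz
    simp only [Nat.add_sub_cancel]
    rw [hDe, hDe]
    exact ⟨h1, h2⟩

theorem good_mul_pow {μ : Measure ℝ} [IsFiniteMeasure μ] (hK : IsCompact (msupp μ))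
    (hf : PhiFacts (msuppC μ)ᶜ) {r : ℝ → ℂ} {P : ℕ → ℂ[X]} (hG : Good μ r P) {c : ℂ}
    (hc : c ∈ (msuppC μ)ᶜ) (k : ℕ) :
    ∃ P' : ℕ → ℂ[X], Good μ (fun x => ((x : ℂ) - c) ^ k * r x) P' := by
  induction k with
  | zero => exact ⟨P, by simpa using hG⟩
  | succ k ih =>
    obtain ⟨P1, h1⟩ := ih
    obtain ⟨P2, h2⟩ := good_mul hK hf h1 hc
    refine ⟨P2, ?_⟩
    convert h2 using 2 with x
    ring

theorem good_div_pow {μ : Measure ℝ} [IsFiniteMeasure μ] (hK : IsCompact (msupp μ))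
    (hf : PhiFacts (msuppC μ)ᶜ) {r : ℝ → ℂ} {P : ℕ → ℂ[X]} (hG : Good μ r P) {d : ℂ}
    (hd : d ∈ (msuppC μ)ᶜ) (k : ℕ) :
    ∃ P' : ℕ → ℂ[X], Good μ (fun x => r x / ((x : ℂ) - d) ^ k) P' := by
  induction k with
  | zero => exact ⟨P, by simpa using hG⟩
  | succ k ih =>
    obtain ⟨P1, h1⟩ := ih
    obtain ⟨P2, h2⟩ := good_div hK hf h1 hd
    refine ⟨P2, ?_⟩
    convert h2 using 2 with x
    rw [pow_succ, div_div]

theorem good_ratFn {μ : Measure ℝ} [IsFiniteMeasure μ] (hK : IsCompact (msupp μ))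
    {l : ℕ → ℝ[X]} {a b : ℕ → ℝ} (hM : IsM01 μ l a b)
    (h ℓ : ℕ) (c : Fin h → ℂ) (d : Fin ℓ → ℂ) (A : Fin h → ℕ) (B : Fin ℓ → ℕ)
    (hc : ∀ i, c i ∉ msuppC μ) (hd : ∀ j, d j ∉ msuppC μ) :
    ∃ P : ℕ → ℂ[X], Good μ (ratFn c d A B) P := by
  have hf := phiFacts hK hM
  have h1 : ∀ s : Finset (Fin h), ∃ P : ℕ → ℂ[X],
      Good μ (fun x => ∏ i ∈ s, ((x : ℂ) - c i) ^ (A i)) P := by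
    intro s
    induction s using Finset.induction_on with
    | empty => exact ⟨mc l, by simpa using good_base hK hM⟩
    | insert i s hi ih =>
      obtain ⟨P1, h1⟩ := ih
      obtain ⟨P2, h2⟩ := good_mul_pow hK hf h1 (hc i) (A i)
      refine ⟨P2, ?_⟩
      convert h2 using 2 with x
      rw [Finset.prod_insert hi]
  have h2 : ∀ s : Finset (Fin ℓ), ∃ P : ℕ → ℂ[X],
      Good μ (fun x => (∏ i, ((x : ℂ) - c i) ^ (A i)) / ∏ j ∈ s, ((x : ℂ) - d j) ^ (B j)) P := by
    intro s
    induction s using Finset.induction_on with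
    | empty => simpa using h1 Finset.univ
    | insert i s hi ih =>
      obtain ⟨P1, h1⟩ := ih
      obtain ⟨P2, h2⟩ := good_div_pow hK hf h1 (hd i) (B i)
      refine ⟨P2, ?_⟩
      convert h2 using 2 with x
      rw [Finset.prod_insert hi, div_div, mul_comm]
  exact h2 Finset.univ

theorem Q_eq {μ : Measure ℝ} [IsFiniteMeasure μ] (hK : IsCompact (msupp μ))
    {r : ℝ → ℂ} {P : ℕ → ℂ[X]} (hG : Good μ r P) {Q : ℕ → ℂ[X]}
    (hQ : ∀ n, IsQPoly μ r n (Q n)) : ∀ᶠ n in atTop, Q n = P n := by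
  filter_upwards [hG.monic, hG.orth, hG.uniq] with n hm ho hu
  obtain ⟨q1, q2, q3⟩ := hQ n
  have hdeg : (Q n).degree ≤ n := by
    have := q3 (P n) hm.1.ne_zero ho
    rwa [degree_eq_natDegree hm.1.ne_zero, hm.2] at this
  have he := mult_of_uniq hK hG.cont hm.1 hm.2 ho hu (Q n)
    (hdeg.trans_lt (by exact_mod_cast Nat.lt_succ_self n)) q2
  have hc : (Q n).coeff n ≠ 0 := by
    intro h0
    rw [h0, C_0, zero_mul] at he
    exact q1.ne_zero he
  have hl : (Q n).leadingCoeff = (Q n).coeff n * (P n).leadingCoeff := by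
    conv_lhs => rw [he]
    rw [leadingCoeff_mul, leadingCoeff_C]
  rw [q1.leadingCoeff, hm.1.leadingCoeff, mul_one] at hl
  rw [he, ← hl, C_1, one_mul]

theorem CC.log_step {Ω : Set ℂ} (hΩ : IsOpen Ω) (hf : PhiFacts Ω) {F : ℕ → ℂ[X]}
    (h : CC Ω (fun n z => (F (n + 1)).eval z / (F n).eval z) (fun z => phi z / 2)) :
    CC Ω (fun n z => (1 / (n : ℂ)) * ((derivative (F n)).eval z / (F n).eval z))
      (fun z => 1 / sqrtB z) := by
  have hne : ∀ z ∈ Ω, ∀ᶠ p : ℕ × ℂ in atTop ×ˢ 𝓝 z, (F p.1).eval p.2 ≠ 0 := by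
    intro z hz
    filter_upwards [h.ev_ne hz (div_ne_zero (hf.phi_ne hz) two_ne_zero)] with p hp
    exact (div_ne_zero_iff.1 hp).2
  have hdiff : DifferentiableOn ℂ (fun z => phi z / 2) Ω :=
    fun z hz => ((hf.phi_diff hz).div_const 2).differentiableWithinAt
  have hd : CC Ω (fun n => deriv (fun z => (F (n + 1)).eval z / (F n).eval z))
      (deriv (fun z => phi z / 2)) := by
    intro z hz
    obtain ⟨N, ρ, hρ, hN⟩ := ev_nhds (hne z hz)
    set U := Metric.ball z ρ ∩ Ω with hU
    have hUo : IsOpen U := Metric.isOpen_ball.inter hΩ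
    have hzU : z ∈ U := ⟨Metric.mem_ball_self hρ, hz⟩
    have h1 := (h.mono (U := U) inter_subset_right).tluo (hdiff.continuousOn.mono inter_subset_right)
    have h2 := h1.deriv (by
      filter_upwards [eventually_ge_atTop N] with n hn
      intro w hw
      exact ((F (n + 1)).differentiableAt.div (F n).differentiableAt
        (hN n hn w hw.1)).differentiableWithinAt) hUo
    exact CC.of_tluo hUo h2 ((hdiff.mono inter_subset_right).deriv hUo).continuousOn z hzU
  refine CC.cesaro (f := fun n z => (derivative (F n)).eval z / (F n).eval z) ?_ ?_
  · refine ((hd.div h fun z hz => div_ne_zero (hf.phi_ne hz) two_ne_zero).congr ?_).congr_lim ?_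
    · intro z hz
      filter_upwards [hne z hz, (tendsto_succ_prod z).eventually (hne z hz)] with p h1 h2
      have e := (((F (p.1 + 1)).hasDerivAt p.2).div ((F p.1).hasDerivAt p.2) h1).deriv
      have e' : deriv (fun z => (F (p.1 + 1)).eval z / (F p.1).eval z) p.2 = _ := e
      rw [e']
      field_simp
    · intro z hz
      have e := ((hf.deriv_phi hΩ hz).div_const 2).deriv
      have e1 := hf.phi_ne hz
      have e2 := hf.sne z hz
      rw [e]
      field_simp
  · intro z hz
    filter_upwards [ev_pt (hne z hz)] with n hn
    exact (derivative (F n)).continuous.continuousAt.div (F n).continuous.continuousAt hn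

theorem CC.deriv_step {Ω : Set ℂ} (hΩ : IsOpen Ω) (hf : PhiFacts Ω) {F : ℕ → ℂ[X]}
    (h : CC Ω (fun n z => (F (n + 1)).eval z / (F n).eval z) (fun z => phi z / 2)) :
    CC Ω (fun n z => (derivative (F (n + 1))).eval z / (derivative (F n)).eval z)
      (fun z => phi z / 2) := by
  have h1 := CC.log_step hΩ hf h
  have h2 : CC Ω (fun n z => ((1 / (n : ℂ)) * (derivative (F n)).eval z) / (F n).eval z)
      (fun z => 1 / sqrtB z) := h1.congr fun z _ => Eventually.of_forall fun p => by ring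
  have h3 := CC.transfer (A := fun n z => (1 / (n : ℂ)) * (derivative (F n)).eval z)
    (B := fun n z => (F n).eval z) h2 (fun z hz => one_div_ne_zero (hf.sne z hz)) h
    (fun z hz => div_ne_zero (hf.phi_ne hz) two_ne_zero)
  have h4 : Tendsto (fun n : ℕ => ((n : ℂ) + 1) / n) atTop (𝓝 1) := by
    have h5 : Tendsto (fun n : ℕ => 1 + (1 : ℂ) / n) atTop (𝓝 (1 + 0)) :=
      tendsto_const_nhds.add tendsto_one_div_atTop_nhds_zero_nat
    rw [add_zero] at h5
    refine h5.congr' ?_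
    filter_upwards [eventually_ge_atTop 1] with n hn
    have : (n : ℂ) ≠ 0 := by exact_mod_cast (by omega : n ≠ 0)
    field_simp
  refine (((CC.seq (Ω := Ω) h4).mul h3).congr ?_).congr_lim fun z _ => one_mul _
  intro z hz
  filter_upwards [eventually_ge_prod 1 z] with p hp
  have e1 : (p.1 : ℂ) ≠ 0 := by exact_mod_cast (by omega : p.1 ≠ 0)
  have e2 : (p.1 : ℂ) + 1 ≠ 0 := by exact_mod_cast (by omega : p.1 + 1 ≠ 0)
  push_cast
  by_cases h0 : (derivative (F p.1)).eval p.2 = 0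
  · simp [h0]
  · field_simp

theorem iter_ratio {Ω : Set ℂ} (hΩ : IsOpen Ω) (hf : PhiFacts Ω) {F : ℕ → ℂ[X]}
    (h : CC Ω (fun n z => (F (n + 1)).eval z / (F n).eval z) (fun z => phi z / 2)) (ν : ℕ) :
    CC Ω (fun n z => (derivative^[ν] (F (n + 1))).eval z / (derivative^[ν] (F n)).eval z)
      (fun z => phi z / 2) := by
  induction ν with
  | zero => exact h
  | succ ν ih =>
    simp only [Function.iterate_succ_apply']
    exact CC.deriv_step (F := fun n => derivative^[ν] (F n)) hΩ hf ih

theorem nd_iter (p : ℂ[X]) (ν : ℕ) : (derivative^[ν] p).natDegree = p.natDegree - ν := by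
  induction ν with
  | zero => simp
  | succ ν ih => rw [Function.iterate_succ_apply', natDegree_derivative, ih]; omega

theorem deriv_roots {p : ℂ[X]} (hp : 0 < p.natDegree) {R : ℝ}
    (h : ∀ z : ℂ, R ≤ ‖z‖ → p.eval z ≠ 0) (z : ℂ) (hz : R ≤ ‖z‖) :
    (derivative p).eval z ≠ 0 := by
  intro h0
  have hd0 : derivative p ≠ 0 := by
    intro h
    exact absurd (Polynomial.derivative_eq_zero.1 h) hp.ne'
  have h1 : z ∈ (derivative p).rootSet ℂ := by
    rw [mem_rootSet]
    exact ⟨hd0, by simpa using h0⟩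
  have h2 := rootSet_derivative_subset_convexHull_rootSet (natDegree_pos_iff_degree_pos.1 hp) h1
  have h3 : p.rootSet ℂ ⊆ Metric.ball 0 R := by
    intro w hw
    rw [mem_rootSet] at hw
    rw [mem_ball_zero_iff]
    by_contra hc
    exact h w (not_lt.1 hc) (by simpa using hw.2)
  have h4 := convexHull_min h3 (convex_ball _ _) h2
  rw [mem_ball_zero_iff] at h4
  linarith

theorem log_bound {p : ℂ[X]} {R : ℝ} (h : ∀ z : ℂ, R ≤ ‖z‖ → p.eval z ≠ 0) {z : ℂ}
    {δ : ℝ} (hδ : 0 < δ) (hz : R + δ ≤ ‖z‖) :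
    ‖(derivative p).eval z / p.eval z‖ ≤ p.natDegree * (1 / δ) := by
  have hp0 := h z (by linarith)
  rw [(IsAlgClosed.splits p).eval_derivative_div_eval_of_ne_zero hp0]
  have h1 : ∀ w ∈ p.roots, ‖1 / (z - w)‖ ≤ 1 / δ := by
    intro w hw
    have hw' : ‖w‖ < R := by
      by_contra hc
      exact h w (not_lt.1 hc) (isRoot_of_mem_roots hw)
    rw [norm_div, norm_one]
    apply one_div_le_one_div_of_le hδ
    have := norm_sub_norm_le z w
    linarith
  refine (norm_multiset_sum_le _).trans ?_
  rw [Multiset.map_map]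
  refine (Multiset.sum_le_card_nsmul _ (1 / δ) ?_).trans ?_
  · intro x hx
    obtain ⟨w, hw, rfl⟩ := Multiset.mem_map.1 hx
    exact h1 w hw
  · rw [Multiset.card_map, nsmul_eq_mul]
    have := p.card_roots'
    gcongr

theorem sqrtB_large {Ω : Set ℂ} (hf : PhiFacts Ω) {z : ℂ} (hz : z ∈ Ω) {M : ℝ} (hM : 0 ≤ M)
    (h : M + 1 ≤ ‖z‖) : M ≤ ‖sqrtB z‖ := by
  have h1 : ‖z‖ ^ 2 - 1 ≤ ‖sqrtB z‖ ^ 2 := by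
    rw [← norm_pow, ← norm_pow, hf.sq z hz]
    have := norm_sub_norm_le (z ^ 2) 1
    rwa [norm_one] at this
  refine (sq_le_sq₀ hM (norm_nonneg _)).1 ?_
  nlinarith

theorem closed_unif {Ω : Set ℂ} (hf : PhiFacts Ω) {F : ℕ → ℂ[X]}
    (h : CC Ω (fun n z => (1 / (n : ℂ)) * ((derivative (F n)).eval z / (F n).eval z))
      (fun z => 1 / sqrtB z)) {R : ℝ} {N : ℕ}
    (hd : ∀ n ≥ N, (F n).natDegree ≤ n)
    (hR : ∀ n ≥ N, ∀ z : ℂ, R ≤ ‖z‖ → (F n).eval z ≠ 0)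
    {K : Set ℂ} (hK : IsClosed K) (hKΩ : K ⊆ Ω) :
    TendstoUniformlyOn
      (fun (n : ℕ) (z : ℂ) => (1 / (n : ℂ)) * ((derivative (F n)).eval z / (F n).eval z))
      (fun z => 1 / sqrtB z) atTop K := by
  have hcont : ContinuousOn (fun z => 1 / sqrtB z) Ω := fun z hz =>
    (continuousAt_const.div (hf.diff z hz).continuousAt (hf.sne z hz)).continuousWithinAt
  rw [Metric.tendstoUniformlyOn_iff]
  intro ε hε
  set δ : ℝ := 3 / ε with hδ
  have hδ0 : 0 < δ := by positivity
  have hδ1 : 1 / δ = ε / 3 := by rw [hδ, one_div_div]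
  set R' : ℝ := max (R + δ) (δ + 1) with hR'
  have h1 := Metric.tendstoUniformlyOn_iff.1 (h.compact hcont
    ((isCompact_closedBall (0 : ℂ) R').inter_left hK) (inter_subset_left.trans hKΩ)) ε hε
  filter_upwards [h1, eventually_ge_atTop N, eventually_ge_atTop 1] with n h1 hn hn1 z hz
  by_cases hzR : ‖z‖ ≤ R'
  · exact h1 z ⟨hz, by simpa using hzR⟩
  · have hzR := (not_le.1 hzR).le
    have a1 := log_bound (hR n hn) hδ0 ((le_max_left _ _).trans hzR)
    have a2 := sqrtB_large hf (hKΩ hz) hδ0.le ((le_max_right _ _).trans hzR)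
    have a3 : ‖1 / sqrtB z‖ ≤ ε / 3 := by
      rw [norm_div, norm_one, ← hδ1]
      exact one_div_le_one_div_of_le hδ0 a2
    have hn0 : (0 : ℝ) < n := by exact_mod_cast hn1
    have a4 : ‖(1 / (n : ℂ)) * ((derivative (F n)).eval z / (F n).eval z)‖ ≤ ε / 3 := by
      rw [norm_mul, norm_div, norm_one, Complex.norm_natCast, ← hδ1]
      have a5 : ((F n).natDegree : ℝ) ≤ n := by exact_mod_cast hd n hn
      calc 1 / (n : ℝ) * ‖(derivative (F n)).eval z / (F n).eval z‖
          ≤ 1 / (n : ℝ) * (n * (1 / δ)) := by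
            gcongr
            exact a1.trans (by gcongr)
        _ = 1 / δ := by field_simp
    rw [dist_eq_norm]
    refine (norm_sub_le _ _).trans_lt ?_
    linarith

theorem iter_roots {Q : ℕ → ℂ[X]} {R : ℝ} {N : ℕ}
    (hd : ∀ n ≥ N, (Q n).natDegree = n)
    (hR : ∀ n ≥ N, ∀ z : ℂ, R ≤ ‖z‖ → (Q n).eval z ≠ 0) (ν : ℕ) :
    ∀ n ≥ N + ν, ∀ z : ℂ, R ≤ ‖z‖ → (derivative^[ν] (Q n)).eval z ≠ 0 := by
  induction ν with
  | zero => exact hR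
  | succ ν ih =>
    intro n hn z hz
    rw [Function.iterate_succ_apply']
    refine deriv_roots ?_ (ih n (by omega)) z hz
    rw [nd_iter, hd n (by omega)]
    omega

/-- Theorem 1, formulas (3.3) and (3.4). For `μ ∈ M(0,1)` and
each fixed `ν ≥ 0`: `Q_{n+1}^{(ν)}/Q_n^{(ν)} ⇉ φ(z)/2` on compact subsets of
`ℂ ∖ S_μ` and `(1/n)·Q_n^{(ν+1)}/Q_n^{(ν)} ⇉ 1/√(z²-1)` on compact subsets of
`ℂ̄ ∖ S_μ` (compact subsets of the sphere correspond to closed subsets of ℂ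
avoiding S_μ). -/
theorem ratio_asymptotics_Q
    (μ : Measure ℝ) [IsFiniteMeasure μ] (l : ℕ → Polynomial ℝ) (a b : ℕ → ℝ)
    (hcompact : IsCompact (msupp μ)) (hinf : (msupp μ).Infinite)
    (hM01 : IsM01 μ l a b)
    (h ℓ : ℕ) (c : Fin h → ℂ) (d : Fin ℓ → ℂ) (A : Fin h → ℕ) (B : Fin ℓ → ℕ)
    (hA : ∀ i, 0 < A i) (hB : ∀ j, 0 < B j)
    (hc : ∀ i, c i ∉ msuppC μ) (hd : ∀ j, d j ∉ msuppC μ)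
    (hcd : ∀ i j, c i ≠ d j)
    (Q : ℕ → Polynomial ℂ) (hQ : ∀ n, IsQPoly μ (ratFn c d A B) n (Q n)) :
    ∀ ν : ℕ,
      (∀ K : Set ℂ, IsCompact K → K ⊆ (msuppC μ)ᶜ →
        TendstoUniformlyOn
          (fun (n : ℕ) (z : ℂ) =>
            (derivative^[ν] (Q (n + 1))).eval z / (derivative^[ν] (Q n)).eval z)
          (fun z => phi z / 2) atTop K) ∧
      (∀ F : Set ℂ, IsClosed F → F ⊆ (msuppC μ)ᶜ →
        TendstoUniformlyOn
          (fun (n : ℕ) (z : ℂ) =>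
            (1 / (n : ℂ)) *
              ((derivative^[ν + 1] (Q n)).eval z / (derivative^[ν] (Q n)).eval z))
          (fun z => 1 / sqrtB z) atTop F) := by
  obtain ⟨P, hG⟩ := good_ratFn hcompact hM01 h ℓ c d A B hc hd
  have hf := phiFacts hcompact hM01
  have hΩ := isOpen_Om hcompact
  have hQP := Q_eq hcompact hG hQ
  obtain ⟨R, N0, hR⟩ := hG.inf 0
  obtain ⟨N1, hN1⟩ := eventually_atTop.1 hQP
  obtain ⟨N2, hN2⟩ := eventually_atTop.1 hG.monic
  have hdeg : ∀ n ≥ N0 + N1 + N2, (Q n).natDegree = n := by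
    intro n hn
    rw [hN1 n (by omega)]
    exact (hN2 n (by omega)).2
  have hroot : ∀ n ≥ N0 + N1 + N2, ∀ z : ℂ, R ≤ ‖z‖ → (Q n).eval z ≠ 0 := by
    intro n hn z hz
    rw [hN1 n (by omega)]
    exact (hR n (by omega) z hz).1
  have hratio : CC (msuppC μ)ᶜ (fun n z => (Q (n + 1)).eval z / (Q n).eval z)
      (fun z => phi z / 2) := by
    refine hG.ratio.congr fun z _ => ?_
    filter_upwards [eventually_ge_prod N1 z] with p hp
    rw [hN1 p.1 hp, hN1 (p.1 + 1) (by omega)]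
  intro ν
  have h1 := iter_ratio hΩ hf hratio ν
  refine ⟨fun K hK hKΩ => h1.compact ?_ hK hKΩ, fun F hF hFΩ => ?_⟩
  · exact fun z hz => ((hf.phi_diff hz).div_const 2).continuousAt.continuousWithinAt
  · have h2 := CC.log_step (F := fun n => derivative^[ν] (Q n)) hΩ hf h1
    simp only [Function.iterate_succ_apply']
    refine closed_unif (F := fun n => derivative^[ν] (Q n)) (N := N0 + N1 + N2 + ν) hf h2 ?_
      (iter_roots hdeg hroot ν) hF hFΩ
    intro n hn
    rw [nd_iter, hdeg n (by omega)]
    omega
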